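/- Let a = b be positive real numbers and c > 2a a real number. Then the holomorphic automorphism F = φ₃ ∘ φ₂⁻¹ ∘ φ₁⁻¹ ∘ φ₂ ∘ φ₁ of ℂ³ is tangent to the identity at the origin and its basin of attraction Ω = {p ∈ ℂ³ \ {0} : F^n(p) → 0} is biholomorphic to ℂ* × ℂ². -/

import Mathlib

open Filter Set

/-- The shear `φ₁(z,t,w) = (z, t, w − zt)`. -/
noncomputable def φ₁ (p : ℂ × ℂ × ℂ) : ℂ × ℂ × ℂ :=
  (p.1, p.2.1, p.2.2 - p.1 * p.2.1)

/-- The inverse shear `φ₁⁻¹(z,t,w) = (z, t, w + zt)`. -/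
noncomputable def φ₁inv (p : ℂ × ℂ × ℂ) : ℂ × ℂ × ℂ :=
  (p.1, p.2.1, p.2.2 + p.1 * p.2.1)

/-- The overshear `φ₂(z,t,w) = (z·e^{aw}, t·e^{bw}, w)`. -/
noncomputable def φ₂ (a b : ℂ) (p : ℂ × ℂ × ℂ) : ℂ × ℂ × ℂ :=
  (p.1 * Complex.exp (a * p.2.2), p.2.1 * Complex.exp (b * p.2.2), p.2.2)

/-- The inverse overshear `φ₂⁻¹(z,t,w) = (z·e^{−aw}, t·e^{−bw}, w)`. -/
noncomputable def φ₂inv (a b : ℂ) (p : ℂ × ℂ × ℂ) : ℂ × ℂ × ℂ :=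
  (p.1 * Complex.exp (-(a * p.2.2)), p.2.1 * Complex.exp (-(b * p.2.2)), p.2.2)

/-- The overshear `φ₃(z,t,w) = (z, t, w·e^{−(a+b+c)zt} + (a+b)z²t²)`. -/
noncomputable def φ₃ (a b c : ℂ) (p : ℂ × ℂ × ℂ) : ℂ × ℂ × ℂ :=
  (p.1, p.2.1,
    p.2.2 * Complex.exp (-((a + b + c) * p.1 * p.2.1)) + (a + b) * p.1 ^ 2 * p.2.1 ^ 2)

/-- The automorphism `F = φ₃ ∘ φ₂⁻¹ ∘ φ₁⁻¹ ∘ φ₂ ∘ φ₁` of `ℂ³`. -/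
noncomputable def Fmap (a b c : ℂ) : ℂ × ℂ × ℂ → ℂ × ℂ × ℂ :=
  φ₃ a b c ∘ φ₂inv a b ∘ φ₁inv ∘ φ₂ a b ∘ φ₁

/-- The projection `π(z,t,w) = (zt, w)`. -/
def πmap (p : ℂ × ℂ × ℂ) : ℂ × ℂ := (p.1 * p.2.1, p.2.2)

/-- The basin of attraction `Ω = {p ∈ ℂ³ \ {0} : F^[n] p → 0}` of `F`. -/
noncomputable def basinF (a b c : ℂ) : Set (ℂ × ℂ × ℂ) :=
  {p | p ≠ 0 ∧ Tendsto (fun n => (Fmap a b c)^[n] p) atTop (nhds 0)}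

/-- The basin of attraction `Ω̃ = {q ∈ ℂ² \ {0} : G^[n] q → 0}` of a map `G : ℂ² → ℂ²`. -/
noncomputable def basinG (G : ℂ × ℂ → ℂ × ℂ) : Set (ℂ × ℂ) :=
  {q | q ≠ 0 ∧ Tendsto (fun n => G^[n] q) atTop (nhds 0)}

/-!
For `a = b` the map `F` multiplies `z` and `t` by the same factor, so the ratio `z / t` is constant
along orbits, and `F` is semiconjugate to a planar automorphism `G` through
`(v, ω) = (2a zt, 2a w)`. Points with `zt = 0` are fixed by `F`; hence `Ω` is the preimage of the
part `v ≠ 0` of the basin of `G`, and `p ↦ (z, v, ω)` identifies it with the product of `ℂ*` and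
this planar basin.

To show that the planar basin is biholomorphic to `ℂ²`, let `γ = c / (2a) > 1` and choose a
polynomial `h` for which the curve `ω = v² h(v)` is `G`-invariant to high order. The order is
limited only by the resonance `γ ∈ ℕ`, which leaves a term `κ v ^ (γ + 1)`. In the coordinates
`x = 1 / v` and `y = x ^ γ (ω - v² h(v)) - κ log x`, the map `G` is a summable perturbation of
`(x, y) ↦ (x + 1 - 1 / (2x), y)`, so the limits of `xₙ + log xₙ / 2 - n` and of `yₙ` along orbits
define a biholomorphic map onto `ℂ²`. Because `γ > 1`, the quotient `ω / v`, and then `y`, stays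
bounded along each orbit of the planar basin, so each orbit enters the region where these
coordinates are controlled.
-/

open scoped Topology
open Asymptotics
open Complex (exp log)

section Biholomorphic

variable {E F : Type*} [NormedAddCommGroup E] [NormedSpace ℂ E]
  [NormedAddCommGroup F] [NormedSpace ℂ F]

/-- `Φ` is a biholomorphic map from `U` onto `V` with inverse `Ψ`. -/
structure IsBiholomorphicOn (Φ : E → F) (Ψ : F → E) (U : Set E) (V : Set F) : Prop where
  differentiableOn : DifferentiableOn ℂ Φ U
  differentiableOn_inv : DifferentiableOn ℂ Ψ V
  mapsTo : MapsTo Φ U V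
  mapsTo_inv : MapsTo Ψ V U
  invOn : InvOn Ψ Φ U V

namespace IsBiholomorphicOn

variable {G : Type*} [NormedAddCommGroup G] [NormedSpace ℂ G]
  {Φ : E → F} {Ψ : F → E} {U : Set E} {V : Set F}

lemma bijOn (h : IsBiholomorphicOn Φ Ψ U V) : BijOn Φ U V :=
  h.invOn.bijOn h.mapsTo h.mapsTo_inv

lemma refl (U : Set E) : IsBiholomorphicOn id id U U :=
  ⟨differentiableOn_id, differentiableOn_id, mapsTo_id U, mapsTo_id U,
    fun _ _ => rfl, fun _ _ => rfl⟩

lemma symm (h : IsBiholomorphicOn Φ Ψ U V) : IsBiholomorphicOn Ψ Φ V U :=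
  ⟨h.differentiableOn_inv, h.differentiableOn, h.mapsTo_inv, h.mapsTo, h.invOn.symm⟩

lemma of_leftInverse_rightInverse (hΨ : Function.LeftInverse Ψ Φ)
    (hΨ' : Function.RightInverse Ψ Φ) (hd : DifferentiableOn ℂ Φ (Φ ⁻¹' V))
    (hd' : DifferentiableOn ℂ Ψ V) : IsBiholomorphicOn Φ Ψ (Φ ⁻¹' V) V :=
  ⟨hd, hd', mapsTo_preimage Φ V, fun y hy => by rwa [mem_preimage, hΨ' y],
    hΨ.leftInvOn _, hΨ'.rightInvOn _⟩

lemma trans {Φ' : F → G} {Ψ' : G → F} {W : Set G} (h : IsBiholomorphicOn Φ Ψ U V)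
    (h' : IsBiholomorphicOn Φ' Ψ' V W) : IsBiholomorphicOn (Φ' ∘ Φ) (Ψ ∘ Ψ') U W where
  differentiableOn := h'.differentiableOn.comp h.differentiableOn h.mapsTo
  differentiableOn_inv := h.differentiableOn_inv.comp h'.differentiableOn_inv h'.mapsTo_inv
  mapsTo := h'.mapsTo.comp h.mapsTo
  mapsTo_inv := h.mapsTo_inv.comp h'.mapsTo_inv
  invOn := h.invOn.comp h'.invOn h.mapsTo h'.mapsTo_inv

lemma prodMap {E' F' : Type*} [NormedAddCommGroup E'] [NormedSpace ℂ E'] [NormedAddCommGroup F']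
    [NormedSpace ℂ F'] {Φ' : E' → F'} {Ψ' : F' → E'} {U' : Set E'} {V' : Set F'}
    (h : IsBiholomorphicOn Φ Ψ U V) (h' : IsBiholomorphicOn Φ' Ψ' U' V') :
    IsBiholomorphicOn (Prod.map Φ Φ') (Prod.map Ψ Ψ') (U ×ˢ U') (V ×ˢ V') where
  differentiableOn := (h.differentiableOn.comp differentiableOn_fst mapsTo_fst_prod).prodMk
    (h'.differentiableOn.comp differentiableOn_snd mapsTo_snd_prod)
  differentiableOn_inv := (h.differentiableOn_inv.comp differentiableOn_fst mapsTo_fst_prod).prodMk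
    (h'.differentiableOn_inv.comp differentiableOn_snd mapsTo_snd_prod)
  mapsTo := h.mapsTo.prodMap h'.mapsTo
  mapsTo_inv := h.mapsTo_inv.prodMap h'.mapsTo_inv
  invOn := ⟨h.invOn.1.prodMap h'.invOn.1, h.invOn.2.prodMap h'.invOn.2⟩

lemma iterate {f g : E → E} (h : IsBiholomorphicOn f g U U) (n : ℕ) :
    IsBiholomorphicOn f^[n] g^[n] U U := by
  induction n with
  | zero => exact refl U
  | succ n ih =>
    rw [Function.iterate_succ' f]
    exact ih.trans h

lemma preimage {f g : E → E} {e : F} (h : IsBiholomorphicOn Φ Ψ U V)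
    (hf : IsBiholomorphicOn f g univ univ) (hΦ : ∀ x, f x ∈ U → Φ (f x) = Φ x + e) :
    IsBiholomorphicOn Φ (g ∘ Ψ ∘ (· + e)) (f ⁻¹' U) ((· + e) ⁻¹' V) where
  differentiableOn := by
    refine ((h.differentiableOn.comp (hf.differentiableOn.mono (subset_univ _))
      (mapsTo_preimage f U)).sub_const e).congr fun x hx => ?_
    rw [Function.comp_apply, hΦ x hx, add_sub_cancel_right]
  differentiableOn_inv := hf.differentiableOn_inv.comp (h.differentiableOn_inv.comp
    (differentiableOn_id.add_const e) (mapsTo_preimage _ V)) (mapsTo_univ _ _)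
  mapsTo x hx := by
    rw [mem_preimage, ← hΦ x hx]
    exact h.mapsTo hx
  mapsTo_inv ξ hξ := by
    rw [mem_preimage, Function.comp_apply, hf.invOn.2 (mem_univ _)]
    exact h.mapsTo_inv hξ
  invOn := by
    refine ⟨fun x hx => ?_, fun ξ hξ => ?_⟩
    · simp only [Function.comp_apply]
      rw [← hΦ x hx, h.invOn.1 hx, hf.invOn.1 (mem_univ x)]
    · have hfg := hf.invOn.2 (mem_univ (Ψ (ξ + e)))
      refine add_right_cancel (b := e) ?_
      simp only [Function.comp_apply]
      rw [← hΦ _ (by rw [hfg]; exact h.mapsTo_inv hξ), hfg, h.invOn.2 hξ]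

lemma exists_iUnion {ι : Type*} {S : ι → F → E} {U : ι → Set E} {V : ι → Set F}
    (h : ∀ i, IsBiholomorphicOn Φ (S i) (U i) (V i)) (hU : ∀ i, IsOpen (U i))
    (hV : ∀ i, IsOpen (V i)) (hpair : ∀ x ∈ ⋃ i, U i, ∀ y ∈ ⋃ i, U i, ∃ i, x ∈ U i ∧ y ∈ U i) :
    ∃ Ψ, IsBiholomorphicOn Φ Ψ (⋃ i, U i) (⋃ i, V i) := by
  have hinj : InjOn Φ (⋃ i, U i) := fun x hx y hy hxy => by
    obtain ⟨i, hxi, hyi⟩ := hpair x hx y hy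
    exact (h i).invOn.1.injOn hxi hyi hxy
  have hmaps : MapsTo Φ (⋃ i, U i) (⋃ i, V i) := mapsTo_iUnion_iUnion fun i => (h i).mapsTo
  have hsurj : SurjOn Φ (⋃ i, U i) (⋃ i, V i) := surjOn_iUnion_iUnion fun i => (h i).bijOn.surjOn
  let Ψ := Function.invFunOn Φ (⋃ i, U i)
  have hΨ : InvOn Ψ Φ (⋃ i, U i) (⋃ i, V i) := BijOn.invOn_invFunOn ⟨hmaps, hinj, hsurj⟩
  have hΨmaps : MapsTo Ψ (⋃ i, V i) (⋃ i, U i) := hsurj.mapsTo_invFunOn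
  have hΨS : ∀ i, EqOn Ψ (S i) (V i) := fun i ξ hξ =>
    hinj (hΨmaps (mem_iUnion_of_mem i hξ)) (mem_iUnion_of_mem i ((h i).mapsTo_inv hξ))
      ((hΨ.2 (mem_iUnion_of_mem i hξ)).trans ((h i).invOn.2 hξ).symm)
  refine ⟨Ψ, fun x hx => ?_, fun ξ hξ => ?_, hmaps, hΨmaps, hΨ⟩
  · obtain ⟨i, hi⟩ := mem_iUnion.1 hx
    exact ((h i).differentiableOn.differentiableAt ((hU i).mem_nhds hi)).differentiableWithinAt
  · obtain ⟨i, hi⟩ := mem_iUnion.1 hξ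
    exact (((h i).differentiableOn_inv.congr (hΨS i)).differentiableAt
      ((hV i).mem_nhds hi)).differentiableWithinAt

lemma continuous (h : IsBiholomorphicOn Φ Ψ univ univ) : Continuous Φ :=
  (differentiableOn_univ.1 h.differentiableOn).continuous

/-- On the points that `G^[n]` maps into `U i`, the inverse of `Φ` is
`Ginv^[n] ∘ S i ∘ (· + n • e)`; two points of `B` always have orbits entering a common `U i`, which
makes `Φ` injective. -/
lemma exists_of_iterate {ι : Type*} {G Ginv : E → E} {e : F} {B : Set E} {S : ι → F → E}
    {U : ι → Set E} {V : ι → Set F} (hG : IsBiholomorphicOn G Ginv univ univ)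
    (h : ∀ i, IsBiholomorphicOn Φ (S i) (U i) (V i)) (hU : ∀ i, IsOpen (U i))
    (hV : ∀ i, IsOpen (V i)) (hΦ : ∀ i n q, G^[n] q ∈ U i → Φ (G^[n] q) = Φ q + n • e)
    (hGB : ∀ q, G q ∈ B ↔ q ∈ B) (hUB : ∀ i, U i ⊆ B)
    (hentry : ∀ p ∈ B, ∀ q ∈ B, ∃ i n, G^[n] p ∈ U i ∧ G^[n] q ∈ U i)
    (hsurj : ∀ ξ, ∃ i, ∃ n : ℕ, ξ + n • e ∈ V i) :
    ∃ Ψ, IsBiholomorphicOn Φ Ψ B univ := by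
  have hGn : ∀ n, IsBiholomorphicOn G^[n] Ginv^[n] univ univ := hG.iterate
  have hGnB : ∀ n q, G^[n] q ∈ B ↔ q ∈ B := fun n q => by
    induction n with
    | zero => rfl
    | succ n ih => rw [Function.iterate_succ_apply', hGB, ih]
  have hUnion : ⋃ i : ι × ℕ, G^[i.2] ⁻¹' U i.1 = B := by
    refine subset_antisymm (iUnion_subset fun i q hq => (hGnB i.2 q).1 (hUB i.1 hq)) fun q hq => ?_
    obtain ⟨i, n, hn, -⟩ := hentry q hq q hq
    exact mem_iUnion.2 ⟨(i, n), hn⟩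
  have hVUnion : ⋃ i : ι × ℕ, (· + i.2 • e) ⁻¹' V i.1 = univ := eq_univ_of_forall fun ξ => by
    obtain ⟨i, n, hn⟩ := hsurj ξ
    exact mem_iUnion.2 ⟨(i, n), hn⟩
  rw [← hUnion, ← hVUnion]
  refine exists_iUnion (fun i : ι × ℕ => (h i.1).preimage (hGn i.2) (hΦ i.1 i.2))
    (fun i => (hU i.1).preimage (hGn i.2).continuous)
    (fun i => (hV i.1).preimage (continuous_add_const _)) fun p hp q hq => ?_
  obtain ⟨i, n, hn⟩ := hentry p (hUnion ▸ hp) q (hUnion ▸ hq)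
  exact ⟨(i, n), hn⟩

end IsBiholomorphicOn

end Biholomorphic

section Holomorphic

variable {E F : Type*} [NormedAddCommGroup E] [NormedSpace ℂ E]
  [NormedAddCommGroup F] [NormedSpace ℂ F]

lemma norm_fderiv_le_of_norm_le {f : E → F} {c : E} {r δ : ℝ} (hr : 0 < r)
    (hd : DifferentiableOn ℂ f (Metric.ball c r)) (hb : ∀ x ∈ Metric.ball c r, ‖f x‖ ≤ δ) :
    ‖fderiv ℂ f c‖ ≤ 2 * δ / r := by
  refine Complex.norm_fderiv_le_div_of_mapsTo_ball hd (fun x hx => ?_) hr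
  rw [mem_closedBall_iff_norm]
  linarith [norm_sub_le (f x) (f c), hb x hx, hb c (Metric.mem_ball_self hr)]

lemma differentiableOn_tsum_of_norm_le [CompleteSpace F] {f : ℕ → E → F} {s : Set E}
    {u : ℕ → ℝ} (hs : IsOpen s) (hu : Summable u) (hd : ∀ n, DifferentiableOn ℂ (f n) s)
    (hb : ∀ n, ∀ x ∈ s, ‖f n x‖ ≤ u n) :
    DifferentiableOn ℂ (fun x => ∑' n, f n x) s := by
  intro x hx
  obtain ⟨r, hr, hrs⟩ := Metric.isOpen_iff.1 hs x hx
  have hr2 : 0 < r / 2 := half_pos hr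
  have hsub : ∀ y ∈ Metric.ball x (r / 2), Metric.ball y (r / 2) ⊆ s := fun y hy =>
    (Metric.ball_subset_ball' (by linarith [Metric.mem_ball.1 hy])).trans hrs
  have hx0 : x ∈ Metric.ball x (r / 2) := Metric.mem_ball_self hr2
  exact (hasFDerivAt_tsum_of_isPreconnected ((hu.mul_left 2).div_const (r / 2))
    Metric.isOpen_ball (convex_ball x (r / 2)).isPreconnected
    (fun n y hy => ((hd n).differentiableAt
      (hs.mem_nhds (hsub y hy (Metric.mem_ball_self hr2)))).hasFDerivAt)
    (fun n y hy => norm_fderiv_le_of_norm_le hr2 ((hd n).mono (hsub y hy))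
      (fun z hz => hb n z (hsub y hy hz))) hx0
    (.of_norm_bounded hu (fun n => hb n x hx)) hx0).differentiableAt.differentiableWithinAt

lemma differentiableOn_of_tendsto_of_norm_sub_le [CompleteSpace F] {f : ℕ → E → F} {g : E → F}
    {s : Set E} {u : ℕ → ℝ} (hs : IsOpen s) (hu : Summable u)
    (hd : ∀ n, DifferentiableOn ℂ (f n) s) (hb : ∀ n, ∀ x ∈ s, ‖f (n + 1) x - f n x‖ ≤ u n)
    (hg : ∀ x ∈ s, Tendsto (fun n => f n x) atTop (𝓝 (g x))) :
    DifferentiableOn ℂ g s := by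
  refine ((hd 0).add (differentiableOn_tsum_of_norm_le hs hu
    (fun n => (hd (n + 1)).sub (hd n)) hb)).congr fun x hx => ?_
  have hsum : Summable fun n => f (n + 1) x - f n x := .of_norm_bounded hu (fun n => hb n x hx)
  have hlim := hsum.hasSum.tendsto_sum_nat.const_add (f 0 x)
  simp only [Finset.sum_range_sub (fun n => f n x), add_sub_cancel] at hlim
  exact tendsto_nhds_unique (hg x hx) hlim

end Holomorphic

section InverseFunction

variable {E : Type*} [NormedAddCommGroup E] [NormedSpace ℂ E]
  {f : E → E} {s : Set E} {c : NNReal}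

lemma nnnorm_refl_symm [Nontrivial E] :
    ‖((ContinuousLinearEquiv.refl ℂ E).symm : E →L[ℂ] E)‖₊ = 1 :=
  ContinuousLinearMap.nnnorm_id

lemma subsingleton_or_lt_nnnorm_refl_symm_inv (hc : c < 1) :
    Subsingleton E ∨ c < ‖((ContinuousLinearEquiv.refl ℂ E).symm : E →L[ℂ] E)‖₊⁻¹ := by
  rcases subsingleton_or_nontrivial E with h | _
  · exact .inl h
  · exact .inr (by rwa [nnnorm_refl_symm, inv_one])

lemma isUnit_fderiv_of_approximatesLinearOn_id [CompleteSpace E]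
    (hf : ApproximatesLinearOn f (ContinuousLinearMap.id ℂ E) s c) (hc : c < 1) (hs : IsOpen s)
    {x : E} (hx : x ∈ s) (hd : DifferentiableAt ℂ f x) : IsUnit (fderiv ℂ f x) := by
  have hle : ‖1 - fderiv ℂ f x‖ ≤ c := by
    rw [norm_sub_rev]
    refine (hd.hasFDerivAt.sub (hasFDerivAt_id x)).le_of_lip' c.coe_nonneg ?_
    filter_upwards [hs.mem_nhds hx] with y hy
    simpa [sub_sub_sub_comm] using hf y hy x hx
  simpa using isUnit_one_sub_of_norm_lt_one (hle.trans_lt hc)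

lemma exists_isBiholomorphicOn_of_approximatesLinearOn_id [CompleteSpace E]
    (hf : ApproximatesLinearOn f (ContinuousLinearMap.id ℂ E) s c) (hc : c < 1) (hs : IsOpen s)
    (hd : DifferentiableOn ℂ f s) :
    IsOpen (f '' s) ∧ ∃ g, IsBiholomorphicOn f g s (f '' s) := by
  have hc' := subsingleton_or_lt_nnnorm_refl_symm_inv (E := E) hc
  let P := hf.toOpenPartialHomeomorph (f' := .refl ℂ E) f s hc' hs
  refine ⟨P.open_target, P.symm, hd, fun y hy => ?_, mapsTo_image f s,
    fun y hy => P.map_target hy, fun x hx => P.left_inv hx, fun y hy => P.right_inv hy⟩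
  have hx : P.symm y ∈ s := P.map_target hy
  have hdx := hd.differentiableAt (hs.mem_nhds hx)
  obtain ⟨A, hA⟩ := isUnit_fderiv_of_approximatesLinearOn_id hf hc hs hx hdx
  have hA' : HasFDerivAt P (ContinuousLinearEquiv.ofUnit A : E →L[ℂ] E) (P.symm y) := by
    change HasFDerivAt f (A : E →L[ℂ] E) _
    exact hA ▸ hdx.hasFDerivAt
  exact (P.hasFDerivAt_symm hy hA').differentiableAt.differentiableWithinAt

lemma closedBall_subset_image_of_approximatesLinearOn_id [CompleteSpace E]
    (hf : ApproximatesLinearOn f (ContinuousLinearMap.id ℂ E) s c) (hc : c < 1) (hs : IsOpen s)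
    {x : E} {r : ℝ} (hr : 0 ≤ r) (hx : Metric.closedBall x r ⊆ s) :
    Metric.closedBall (f x) ((1 - c) * r) ⊆ f '' s := by
  have hc' := subsingleton_or_lt_nnnorm_refl_symm_inv (E := E) hc
  rcases subsingleton_or_nontrivial E with _ | _
  · exact fun y _ => ⟨x, hx (Metric.mem_closedBall_self hr), Subsingleton.elim _ _⟩
  · have h := hf.closedBall_subset_target (f' := .refl ℂ E) hc' hs hr hx
    rwa [nnnorm_refl_symm, inv_one] at h

end InverseFunction

section TranslationPerturbation

variable {Y : Type*} [NormedAddCommGroup Y]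

/-- The right domain `{Re x > R, ‖y‖ < M}` in the `(x, y)`-space. -/
def rightDomain (Y : Type*) [NormedAddCommGroup Y] (R M : ℝ) : Set (ℂ × Y) :=
  {d | R < d.1.re ∧ ‖d.2‖ < M}

/-- The filter of `Re x → +∞` with `‖y‖ < M`, generated by the sets `rightDomain Y R M`. -/
def farRight (Y : Type*) [NormedAddCommGroup Y] (M : ℝ) : Filter (ℂ × Y) :=
  comap (fun d => d.1.re) atTop ⊓ 𝓟 {d | ‖d.2‖ < M}

lemma hasBasis_farRight (M : ℝ) :
    (farRight Y M).HasBasis (fun _ => True) (fun R => rightDomain Y R M) :=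
  ((atTop_basis_Ioi.comap _).inf_principal _)

lemma rightDomain_mem_farRight (R M : ℝ) : rightDomain Y R M ∈ farRight Y M :=
  (hasBasis_farRight M).mem_of_mem trivial

lemma rightDomain_subset {R R' M M' : ℝ} (hR : R' ≤ R) (hM : M ≤ M') :
    rightDomain Y R M ⊆ rightDomain Y R' M' :=
  fun _ hd => ⟨hR.trans_lt hd.1, hd.2.trans_le hM⟩

lemma farRight_mono {M M' : ℝ} (h : M ≤ M') : farRight Y M ≤ farRight Y M' :=
  inf_le_inf_left _ (principal_mono.2 fun _ hd => lt_of_lt_of_le hd h)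

lemma exists_mem_rightDomain_of_tendsto_farRight {u v : ℕ → ℂ × Y} {M₁ M₂ : ℝ}
    (hu : Tendsto u atTop (farRight Y M₁)) (hv : Tendsto v atTop (farRight Y M₂)) (R : ℝ) :
    ∃ n, u n ∈ rightDomain Y R (max M₁ M₂) ∧ v n ∈ rightDomain Y R (max M₁ M₂) := by
  have hD := rightDomain_mem_farRight (Y := Y) R (max M₁ M₂)
  exact (((hu.mono_right (farRight_mono (le_max_left _ _))).eventually hD).and
    ((hv.mono_right (farRight_mono (le_max_right _ _))).eventually hD)).exists

lemma isOpen_rightDomain (R M : ℝ) : IsOpen (rightDomain Y R M) :=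
  (isOpen_lt continuous_const (Complex.continuous_re.comp continuous_fst)).inter
    (isOpen_lt continuous_snd.norm continuous_const)

lemma rightDomain_eq_prod (R M : ℝ) :
    rightDomain Y R M = {x : ℂ | R < x.re} ×ˢ Metric.ball 0 M := by
  ext d
  simp [rightDomain]

lemma convex_rightDomain [NormedSpace ℝ Y] (R M : ℝ) : Convex ℝ (rightDomain Y R M) := by
  rw [rightDomain_eq_prod]
  exact (convex_halfSpace_re_gt R).prod (convex_ball 0 M)

lemma closedBall_subset_rightDomain {R M : ℝ} {d : ℂ × Y} (hd : d ∈ rightDomain Y (R + 1) M) :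
    Metric.closedBall d 1 ⊆ rightDomain Y R (M + 1) := by
  intro e he
  obtain ⟨h1, h2⟩ := max_le_iff.1 (Prod.norm_def (e - d) ▸ mem_closedBall_iff_norm.1 he)
  obtain ⟨h3, h4⟩ := hd
  have hre := (Complex.abs_re_le_norm _).trans h1
  rw [Prod.fst_sub, Complex.sub_re, abs_le] at hre
  have hnorm := norm_le_norm_add_norm_sub' e.2 d.2
  rw [Prod.snd_sub] at h2
  exact ⟨by linarith, by linarith⟩

/-- The model Fatou coordinate `(x, y) ↦ (x + β log x, y)`, with the principal logarithm. -/
noncomputable def logShift (β : ℂ) (d : ℂ × Y) : ℂ × Y := (d.1 + β * log d.1, d.2)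

lemma differentiableAt_logShift [NormedSpace ℂ Y] (β : ℂ) {d : ℂ × Y} (hd : 0 < d.1.re) :
    DifferentiableAt ℂ (logShift β) d := by
  have hslit : d.1 ∈ Complex.slitPlane := .inl hd
  unfold logShift
  fun_prop (disch := assumption)

lemma norm_log_sub_log_le {R : ℝ} (hR : 0 < R) {x y : ℂ} (hx : R < x.re) (hy : R < y.re) :
    ‖log x - log y‖ ≤ R⁻¹ * ‖x - y‖ := by
  refine (convex_halfSpace_re_gt R).norm_image_sub_le_of_norm_hasDerivWithin_le (𝕜 := ℂ)
    (fun z hz => (Complex.hasDerivAt_log (.inl (hR.trans hz))).hasDerivWithinAt)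
    (fun z hz => ?_) hy hx
  rw [norm_inv]
  exact inv_anti₀ hR (le_of_lt hz |>.trans (Complex.re_le_norm z))

lemma norm_logShift_sub_sub_le {β : ℂ} {R M : ℝ} (hR : 0 < R) {d e : ℂ × Y}
    (hd : d ∈ rightDomain Y R M) (he : e ∈ rightDomain Y R M) :
    ‖logShift β d - logShift β e - (d - e)‖ ≤ ‖β‖ / R * ‖d - e‖ := by
  have hsub : logShift β d - logShift β e - (d - e) =
      (β * (log d.1 - log e.1), 0) := by
    ext1
    · simp only [logShift, Prod.mk_sub_mk, Prod.fst_sub]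
      ring
    · simp [logShift]
  rw [hsub, Prod.norm_mk, norm_zero, max_eq_left (norm_nonneg _), norm_mul, div_mul_eq_mul_div,
    mul_div_assoc, div_eq_inv_mul]
  gcongr
  exact (norm_log_sub_log_le hR hd.1 he.1).trans (by gcongr; exact norm_fst_le (d - e))

/-- The `n`-th approximation `logShift β (Tⁿ d) - (n, 0)` to the Fatou coordinates of `T`. -/
noncomputable def fatouSeq (β : ℂ) (T : ℂ × Y → ℂ × Y) (n : ℕ) (d : ℂ × Y) : ℂ × Y :=
  logShift β (T^[n] d) - ((n : ℂ), 0)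

/-- The Fatou coordinates of `T`, that is, the limit of `fatouSeq β T`. -/
noncomputable def fatouLimit (β : ℂ) (T : ℂ × Y → ℂ × Y) (d : ℂ × Y) : ℂ × Y :=
  limUnder atTop fun n => fatouSeq β T n d

lemma fatouSeq_zero (β : ℂ) (T : ℂ × Y → ℂ × Y) : fatouSeq β T 0 = logShift β := by
  ext d <;> simp [fatouSeq]

lemma fatouSeq_iterate (β : ℂ) (T : ℂ × Y → ℂ × Y) (m n : ℕ) (d : ℂ × Y) :
    fatouSeq β T n (T^[m] d) = fatouSeq β T (n + m) d + ((m : ℂ), 0) := by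
  ext1
  · simp only [fatouSeq, Prod.fst_sub, Function.iterate_add_apply, Nat.cast_add, Prod.fst_add]
    ring
  · simp [fatouSeq, Function.iterate_add_apply]

lemma fatouLimit_iterate {β : ℂ} {T : ℂ × Y → ℂ × Y} {m : ℕ} {d : ℂ × Y}
    (h : Tendsto (fun n => fatouSeq β T n (T^[m] d)) atTop (𝓝 (fatouLimit β T (T^[m] d)))) :
    fatouLimit β T (T^[m] d) = fatouLimit β T d + ((m : ℂ), 0) := by
  simp only [fatouSeq_iterate] at h
  have hd := (tendsto_add_atTop_iff_nat (f := fun n => fatouSeq β T n d) m).1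
    (by simpa using h.sub_const ((m : ℂ), (0 : Y)))
  rw [fatouLimit, fatouLimit, hd.limUnder_eq, sub_add_cancel, ← fatouLimit]

lemma fatouSeq_succ_sub (β : ℂ) (T : ℂ × Y → ℂ × Y) (n : ℕ) (d : ℂ × Y) :
    fatouSeq β T (n + 1) d - fatouSeq β T n d =
      logShift β (T (T^[n] d)) - logShift β (T^[n] d) - (1, 0) := by
  ext1
  · simp only [fatouSeq, Function.iterate_succ_apply', Prod.fst_sub, Nat.cast_add, Nat.cast_one]
    ring
  · simp [fatouSeq, Function.iterate_succ_apply']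

/-- Splitting off a power of `R` makes the errors along an orbit with `Re xₙ ≥ R + n/2` both
summable in `n` and small as `R → ∞`. -/
lemma rpow_neg_one_add_le {η R t : ℝ} (hη : 0 < η) (hR : 1 ≤ R) (n : ℕ) (ht : R + n / 2 ≤ t) :
    t ^ (-(1 + η)) ≤ R ^ (-(η / 2)) * (((n : ℝ) + 1) / 2) ^ (-(1 + η / 2)) := by
  have : (0 : ℝ) ≤ n := n.cast_nonneg
  have ht0 : 0 < t := by linarith
  rw [show -(1 + η) = -(η / 2) + -(1 + η / 2) by ring, Real.rpow_add ht0]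
  gcongr ?_ * ?_ <;>
    exact Real.rpow_le_rpow_of_nonpos (by positivity) (by linarith) (by linarith)

lemma summable_half_succ_rpow_neg {s : ℝ} (hs : 1 < s) :
    Summable (fun n : ℕ => (((n : ℝ) + 1) / 2) ^ (-s)) := by
  refine (((summable_nat_add_iff 1).2 ((Real.summable_nat_rpow (p := -s)).2
    (by linarith))).div_const ((2 : ℝ) ^ (-s))).congr fun n => ?_
  rw [Real.div_rpow (by positivity) (by norm_num)]
  push_cast
  rfl

lemma norm_snd_sub_le (β : ℂ) (T : ℂ × Y → ℂ × Y) (d : ℂ × Y) :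
    ‖(T d).2 - d.2‖ ≤ ‖logShift β (T d) - logShift β d - (1, 0)‖ := by
  simp [logShift]

lemma iterate_mem_rightDomain {T : ℂ × Y → ℂ × Y} {u : ℕ → ℝ} {R M : ℝ} (hu : Summable u)
    (hu0 : ∀ n, 0 ≤ u n) (hu1 : ∑' n, u n ≤ 1)
    (hstep : ∀ (n : ℕ), ∀ d ∈ rightDomain Y (R + n / 2) (M + 1),
      ‖(T d).1 - d.1 - 1‖ ≤ 1 / 2 ∧ ‖(T d).2 - d.2‖ ≤ u n)
    {d : ℂ × Y} (hd : d ∈ rightDomain Y R M) (n : ℕ) :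
    T^[n] d ∈ rightDomain Y (R + n / 2) (M + 1) := by
  have hpart : ∀ n, ∑ k ∈ Finset.range n, u k ≤ 1 := fun n =>
    (hu.sum_le_tsum _ fun i _ => hu0 i).trans hu1
  suffices h : T^[n] d ∈ rightDomain Y (R + n / 2) (M + ∑ k ∈ Finset.range n, u k) from
    rightDomain_subset le_rfl (by linarith [hpart n]) h
  induction n with
  | zero => simpa using hd
  | succ n ih =>
    obtain ⟨hfst, hsnd⟩ := hstep n _ (rightDomain_subset le_rfl (by linarith [hpart n]) ih)
    have hre := (Complex.abs_re_le_norm _).trans hfst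
    rw [Complex.sub_re, Complex.sub_re, Complex.one_re, abs_le] at hre
    have hnorm := norm_le_norm_add_norm_sub' (T (T^[n] d)).2 (T^[n] d).2
    rw [Function.iterate_succ_apply', Finset.sum_range_succ]
    push_cast
    exact ⟨by linarith [ih.1], by linarith [ih.2]⟩

lemma differentiableAt_iterate {E : Type*} [NormedAddCommGroup E] [NormedSpace ℂ E] {f : E → E}
    {x : E} {n : ℕ} (h : ∀ k < n, DifferentiableAt ℂ f (f^[k] x)) :
    DifferentiableAt ℂ f^[n] x := by
  induction n with
  | zero => exact differentiableAt_id
  | succ n ih =>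
    rw [Function.iterate_succ']
    exact (h n n.lt_succ_self).comp x (ih fun k hk => h k (hk.trans n.lt_succ_self))

lemma tendsto_add_sub_mul_log_div (β z : ℂ) :
    Tendsto (fun n : ℕ => (z + n - β * log n) / n) atTop (𝓝 1) := by
  have hlog : Tendsto (fun n : ℕ => log n / n) atTop (𝓝 0) := by
    have h := (Complex.continuous_ofReal.tendsto 0).comp
      (Real.isLittleO_log_id_atTop.tendsto_div_nhds_zero.comp tendsto_natCast_atTop_atTop)
    simpa [Function.comp_def] using h
  have h := ((tendsto_const_div_atTop_nhds_zero_nat z).add_const 1).sub (hlog.const_mul β)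
  simp only [zero_add, mul_zero, sub_zero] at h
  refine h.congr' ?_
  filter_upwards [eventually_ne_atTop 0] with n hn
  field_simp [Nat.cast_ne_zero.2 hn]

lemma tendsto_re_add_sub_mul_log_atTop (β z : ℂ) :
    Tendsto (fun n : ℕ => (z + n - β * log n).re) atTop atTop := by
  have h := (tendsto_natCast_atTop_atTop (R := ℝ)).atTop_mul_pos one_pos
    ((Complex.continuous_re.tendsto 1).comp (tendsto_add_sub_mul_log_div β z))
  refine h.congr' ?_
  filter_upwards [eventually_ne_atTop 0] with n hn
  rw [Function.comp_apply, ← Complex.re_ofReal_mul, Complex.ofReal_natCast,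
    mul_div_cancel₀ _ (Nat.cast_ne_zero.2 hn)]

lemma tendsto_logShift_sub (β : ℂ) (ξ : ℂ × Y) :
    Tendsto (fun n : ℕ => logShift β (ξ.1 + n - β * log n, ξ.2) - (ξ + ((n : ℂ), 0)))
      atTop (𝓝 0) := by
  have hquot := tendsto_add_sub_mul_log_div β ξ.1
  have hlog := (continuousAt_clog Complex.one_mem_slitPlane).tendsto.comp hquot
  rw [Complex.log_one] at hlog
  have h := (hlog.const_mul β).prodMk_nhds (tendsto_const_nhds (x := (0 : Y)))
  rw [mul_zero] at h
  refine h.congr' ?_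
  filter_upwards [eventually_ne_atTop 0, hquot.eventually_ne one_ne_zero] with n hn hne
  have hn' : (n : ℂ) ≠ 0 := Nat.cast_ne_zero.2 hn
  have hlogmul : log (ξ.1 + n - β * log n) =
      log n + log ((ξ.1 + n - β * log n) / n) := by
    have h := Complex.log_ofReal_mul (r := n) (by positivity) hne
    rwa [Complex.ofReal_natCast, mul_div_cancel₀ _ hn', Complex.natCast_log] at h
  ext1
  · simp only [logShift, Function.comp_apply, Prod.fst_sub, Prod.fst_add, hlogmul]
    ring
  · simp [logShift]

/-- Up to a summable error, `T` is the translation `(x, y) ↦ (x + 1, y)` near `Re x = +∞` once the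
first variable is replaced by `x + β log x`. -/
structure IsTranslationPerturbation [NormedSpace ℂ Y] (T : ℂ × Y → ℂ × Y) (β : ℂ) (η : ℝ) :
    Prop where
  differentiableAt : ∀ M, ∀ᶠ d in farRight Y M, DifferentiableAt ℂ T d
  tendsto_fst : ∀ M, Tendsto (fun d => (T d).1 - d.1) (farRight Y M) (𝓝 1)
  isBigO : ∀ M, (fun d => logShift β (T d) - logShift β d - (1, 0))
    =O[farRight Y M] fun d => ‖d.1‖ ^ (-(1 + η))

namespace IsTranslationPerturbation

variable [NormedSpace ℂ Y] {T : ℂ × Y → ℂ × Y} {β : ℂ} {η : ℝ}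

lemma exists_bound (hT : IsTranslationPerturbation T β η) (M : ℝ) :
    ∃ R C : ℝ, 0 ≤ C ∧ ∀ d ∈ rightDomain Y R M, DifferentiableAt ℂ T d ∧
      ‖(T d).1 - d.1 - 1‖ ≤ 1 / 2 ∧
      ‖logShift β (T d) - logShift β d - (1, 0)‖ ≤ C * ‖d.1‖ ^ (-(1 + η)) := by
  obtain ⟨C, hC, hO⟩ := (hT.isBigO M).exists_nonneg
  have hfst := (hT.tendsto_fst M).eventually (Metric.closedBall_mem_nhds 1 one_half_pos)
  obtain ⟨R, -, hR⟩ := (hasBasis_farRight M).eventually_iff.1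
    ((hT.differentiableAt M).and (hfst.and hO.bound))
  refine ⟨R, C, hC, fun d hd => ⟨(hR hd).1, mem_closedBall_iff_norm.1 (hR hd).2.1, ?_⟩⟩
  simpa [Real.abs_rpow_of_nonneg] using (hR hd).2.2

lemma exists_summable_bound (hT : IsTranslationPerturbation T β η) (hη : 0 < η) (M : ℝ) {δ : ℝ}
    (hδ : 0 < δ) : ∀ᶠ R in atTop, ∃ u : ℕ → ℝ, Summable u ∧ (∀ n, 0 ≤ u n) ∧ ∑' n, u n ≤ δ ∧
      ∀ (n : ℕ), ∀ d ∈ rightDomain Y (R + n / 2) M, DifferentiableAt ℂ T d ∧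
        ‖(T d).1 - d.1 - 1‖ ≤ 1 / 2 ∧ ‖logShift β (T d) - logShift β d - (1, 0)‖ ≤ u n := by
  obtain ⟨R₁, C, hC, hbound⟩ := hT.exists_bound M
  let b : ℕ → ℝ := fun n => (((n : ℝ) + 1) / 2) ^ (-(1 + η / 2))
  have hlim : Tendsto (fun R : ℝ => C * R ^ (-(η / 2)) * ∑' n, b n) atTop (𝓝 0) := by
    simpa using ((tendsto_rpow_neg_atTop (half_pos hη)).const_mul C).mul_const (∑' n, b n)
  filter_upwards [hlim.eventually (ge_mem_nhds hδ), eventually_ge_atTop R₁,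
    eventually_ge_atTop 1] with R hsmall hR₁ hR
  refine ⟨fun n => C * R ^ (-(η / 2)) * b n, (summable_half_succ_rpow_neg (by linarith)).mul_left _,
    fun n => by positivity, by rwa [tsum_mul_left], fun n d hd => ?_⟩
  have hn : (0 : ℝ) ≤ n / 2 := by positivity
  obtain ⟨hdiff, hfst, herr⟩ := hbound d (rightDomain_subset (by linarith) le_rfl hd)
  refine ⟨hdiff, hfst,
    herr.trans ((mul_le_mul_of_nonneg_left ?_ hC).trans_eq (mul_assoc _ _ _).symm)⟩
  exact rpow_neg_one_add_le hη hR n (hd.1.le.trans (Complex.re_le_norm _))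

lemma eventually_tendsto_fatouSeq [CompleteSpace Y] (hT : IsTranslationPerturbation T β η)
    (hη : 0 < η) (M : ℝ) {δ : ℝ} (hδ : 0 < δ) : ∀ᶠ R in atTop,
      DifferentiableOn ℂ (fatouLimit β T) (rightDomain Y R M) ∧ ∀ d ∈ rightDomain Y R M,
        (∀ n : ℕ, T^[n] d ∈ rightDomain Y (R + n / 2) (M + 1)) ∧
        Tendsto (fun n => fatouSeq β T n d) atTop (𝓝 (fatouLimit β T d)) ∧
        ‖fatouLimit β T d - logShift β d‖ ≤ δ := by
  filter_upwards [hT.exists_summable_bound hη (M + 1) (lt_min hδ one_pos), eventually_ge_atTop 0]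
    with R ⟨u, hu, hu0, htsum, hstep⟩ hR
  have horb : ∀ d ∈ rightDomain Y R M, ∀ n : ℕ,
      T^[n] d ∈ rightDomain Y (R + n / 2) (M + 1) := fun d hd =>
    iterate_mem_rightDomain hu hu0 (htsum.trans (min_le_right _ _))
      (fun n e he => ⟨(hstep n e he).2.1, (norm_snd_sub_le β T e).trans (hstep n e he).2.2⟩) hd
  have hinc : ∀ n, ∀ d ∈ rightDomain Y R M,
      ‖fatouSeq β T (n + 1) d - fatouSeq β T n d‖ ≤ u n := fun n d hd => by
    rw [fatouSeq_succ_sub]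
    exact (hstep n _ (horb d hd n)).2.2
  have hlim : ∀ d ∈ rightDomain Y R M,
      Tendsto (fun n => fatouSeq β T n d) atTop (𝓝 (fatouLimit β T d)) := fun d hd =>
    (cauchySeq_of_dist_le_of_summable u
      (fun n => by rw [dist_comm, dist_eq_norm]; exact hinc n d hd) hu).tendsto_limUnder
  refine ⟨differentiableOn_of_tendsto_of_norm_sub_le (isOpen_rightDomain R M) hu (fun n => ?_) hinc
    hlim, fun d hd => ⟨horb d hd, hlim d hd, ?_⟩⟩
  · have hiter : ∀ d ∈ rightDomain Y R M, DifferentiableAt ℂ T^[n] d := fun d hd =>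
      differentiableAt_iterate fun k _ => (hstep k _ (horb d hd k)).1
    exact fun d hd => (((differentiableAt_logShift β (hR.trans_lt
      ((le_add_of_nonneg_right (by positivity)).trans_lt (horb d hd n).1))).comp d
        (hiter d hd)).sub_const _).differentiableWithinAt
  · have hdist := dist_le_tsum_of_dist_le_of_tendsto₀ u
      (fun n => by rw [dist_comm, dist_eq_norm]; exact hinc n d hd) hu (hlim d hd)
    rw [fatouSeq_zero, dist_comm, dist_eq_norm] at hdist
    exact hdist.trans (htsum.trans (min_le_left _ _))

lemma eventually_tendsto_iterate [CompleteSpace Y] (hT : IsTranslationPerturbation T β η)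
    (hη : 0 < η) (M : ℝ) :
    ∀ᶠ d in farRight Y M, Tendsto (fun n => T^[n] d) atTop (farRight Y (M + 1)) := by
  obtain ⟨R, -, hR⟩ := (hT.eventually_tendsto_fatouSeq hη M one_pos).exists
  filter_upwards [rightDomain_mem_farRight R M] with d hd
  have hmem := (hR d hd).1
  have hre : Tendsto (fun n : ℕ => R + (n : ℝ) / 2) atTop atTop :=
    tendsto_atTop_add_const_left _ R (tendsto_natCast_atTop_atTop.atTop_div_const two_pos)
  exact tendsto_inf.2 ⟨tendsto_comap_iff.2 (tendsto_atTop_mono (fun n => (hmem n).1.le) hre),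
    tendsto_principal.2 (.of_forall fun n => (hmem n).2)⟩

/-- `fatouLimit β T - logShift β` is small, hence by Cauchy's estimate so is its derivative, and
`logShift β - id` is a contraction for large `R`. -/
lemma eventually_approximatesLinearOn_fatouLimit [CompleteSpace Y]
    (hT : IsTranslationPerturbation T β η) (hη : 0 < η) (M : ℝ) : ∀ᶠ R in atTop,
      ApproximatesLinearOn (fatouLimit β T) (ContinuousLinearMap.id ℂ (ℂ × Y))
        (rightDomain Y R M) (1 / 2) := by
  have hshift : Tendsto (fun R : ℝ => R - 1) atTop atTop :=
    tendsto_atTop_add_const_right _ (-1) tendsto_id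
  filter_upwards [hshift.eventually (hT.eventually_tendsto_fatouSeq hη (M + 1)
    (by norm_num : (0 : ℝ) < 1 / 8)), eventually_ge_atTop (4 * ‖β‖), eventually_gt_atTop 1]
    with R ⟨hdiff, hlim⟩ hβ hR d hd e he
  let err : ℂ × Y → ℂ × Y := fun d => fatouLimit β T d - logShift β d
  have hball : ∀ d ∈ rightDomain Y R M,
      Metric.closedBall d 1 ⊆ rightDomain Y (R - 1) (M + 1) := fun d hd =>
    closedBall_subset_rightDomain (by rwa [sub_add_cancel])
  have herrd : DifferentiableOn ℂ err (rightDomain Y (R - 1) (M + 1)) := hdiff.sub fun d hd =>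
    (differentiableAt_logShift β ((sub_pos.2 hR).trans hd.1)).differentiableWithinAt
  have herr : ‖err d - err e‖ ≤ 1 / 4 * ‖d - e‖ := by
    refine (convex_rightDomain R M).norm_image_sub_le_of_norm_fderiv_le (𝕜 := ℂ)
      (fun x hx => herrd.differentiableAt ((isOpen_rightDomain _ _).mem_nhds
        (hball x hx (Metric.mem_closedBall_self zero_le_one)))) (fun x hx => ?_) he hd
    have hb := Metric.ball_subset_closedBall.trans (hball x hx)
    exact (norm_fderiv_le_of_norm_le one_pos (herrd.mono hb)
      fun y hy => (hlim y (hb hy)).2.2).trans (by norm_num)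
  have hmodel := norm_logShift_sub_sub_le (β := β) (one_pos.trans hR) hd he
  have hβR : ‖β‖ / R ≤ 1 / 4 := by rw [div_le_iff₀ (by linarith)]; linarith
  calc ‖fatouLimit β T d - fatouLimit β T e - (d - e)‖
      = ‖(err d - err e) + (logShift β d - logShift β e - (d - e))‖ := by
        congr 1; simp only [err]; abel
    _ ≤ 1 / 4 * ‖d - e‖ + 1 / 4 * ‖d - e‖ := norm_add_le_of_le herr (hmodel.trans (by gcongr))
    _ = ((1 / 2 : NNReal) : ℝ) * ‖d - e‖ := by push_cast; ring

/-- The approximate preimage `(x + n - β log n, y)` of `(x + n, y)` is close to a genuine one. -/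
lemma eventually_exists_mem_image_fatouLimit [CompleteSpace Y]
    (hT : IsTranslationPerturbation T β η) (hη : 0 < η) (M : ℝ) : ∀ᶠ R in atTop,
      ∀ ξ : ℂ × Y, ‖ξ.2‖ + 1 < M →
        ∃ n : ℕ, ξ + ((n : ℂ), 0) ∈ fatouLimit β T '' rightDomain Y R M := by
  filter_upwards [hT.eventually_tendsto_fatouSeq hη M (by norm_num : (0 : ℝ) < 1 / 4),
    hT.eventually_approximatesLinearOn_fatouLimit hη M]
    with R ⟨_, hlim⟩ hlin ξ hξ
  obtain ⟨n, hre, hn⟩ :=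
    (((tendsto_re_add_sub_mul_log_atTop β ξ.1).eventually_gt_atTop (R + 1)).and
      ((tendsto_logShift_sub β ξ).eventually (Metric.closedBall_mem_nhds 0
        (by norm_num : (0 : ℝ) < 1 / 4)))).exists
  let b : ℂ × Y := (ξ.1 + n - β * log n, ξ.2)
  have hball : Metric.closedBall b 1 ⊆ rightDomain Y R M := by
    have h := closedBall_subset_rightDomain (R := R) (M := M - 1) (d := b)
      ⟨hre, by linarith⟩
    rwa [sub_add_cancel] at h
  refine ⟨n, closedBall_subset_image_of_approximatesLinearOn_id hlin (by norm_num)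
    (isOpen_rightDomain R M) zero_le_one hball ?_⟩
  have hΦb := (hlim b (hball (Metric.mem_closedBall_self zero_le_one))).2.2
  rw [mem_closedBall_iff_norm, norm_sub_rev]
  calc ‖fatouLimit β T b - (ξ + ((n : ℂ), 0))‖
      ≤ ‖fatouLimit β T b - logShift β b‖ + ‖logShift β b - (ξ + ((n : ℂ), 0))‖ :=
        norm_sub_le_norm_sub_add_norm_sub _ _ _
    _ ≤ 1 / 4 + 1 / 4 := add_le_add hΦb (mem_closedBall_zero_iff.1 hn)
    _ = (1 - ((1 / 2 : NNReal) : ℝ)) * 1 := by push_cast; norm_num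

lemma exists_rightDomain [CompleteSpace Y] (hT : IsTranslationPerturbation T β η) (hη : 0 < η)
    {p : ℂ × Y → Prop} (M : ℝ) (hp : ∀ᶠ d in farRight Y M, p d) : ∃ R, ∃ S : ℂ × Y → ℂ × Y,
      IsBiholomorphicOn (fatouLimit β T) S (rightDomain Y R M)
        (fatouLimit β T '' rightDomain Y R M) ∧
      IsOpen (fatouLimit β T '' rightDomain Y R M) ∧
      (∀ ξ : ℂ × Y, ‖ξ.2‖ + 1 < M →
        ∃ n : ℕ, ξ + ((n : ℂ), 0) ∈ fatouLimit β T '' rightDomain Y R M) ∧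
      ∀ d ∈ rightDomain Y R M,
        Tendsto (fun n => fatouSeq β T n d) atTop (𝓝 (fatouLimit β T d)) ∧ p d := by
  obtain ⟨R₀, -, hR₀⟩ := (hasBasis_farRight M).eventually_iff.1 hp
  obtain ⟨R, ⟨hdiff, hlim⟩, hlin, hsurj, hR⟩ :=
    ((hT.eventually_tendsto_fatouSeq hη M one_pos).and
      ((hT.eventually_approximatesLinearOn_fatouLimit hη M).and
        ((hT.eventually_exists_mem_image_fatouLimit hη M).and (eventually_ge_atTop R₀)))).exists
  obtain ⟨hopen, S, hS⟩ := exists_isBiholomorphicOn_of_approximatesLinearOn_id hlin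
    (by norm_num [← NNReal.coe_lt_coe]) (isOpen_rightDomain R M) hdiff
  exact ⟨R, S, hS, hopen, hsurj,
    fun d hd => ⟨(hlim d hd).2.1, hR₀ (rightDomain_subset hR le_rfl hd)⟩⟩

theorem exists_isBiholomorphicOn_univ [CompleteSpace Y] {E : Type*} [NormedAddCommGroup E]
    [NormedSpace ℂ E] {G Ginv : E → E} {χ : E → ℂ × Y} {χinv : ℂ × Y → E} {B : Set E}
    (hG : IsBiholomorphicOn G Ginv univ univ) (hχ : Function.LeftInverse χinv χ)
    (hχinv : Function.RightInverse χinv χ) (hη : 0 < η)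
    (hT : IsTranslationPerturbation (χ ∘ G ∘ χinv) β η)
    (hdiff : ∀ M, ∀ᶠ d in farRight Y M, DifferentiableAt ℂ χinv d ∧ DifferentiableAt ℂ χ (χinv d))
    (hGB : ∀ q, G q ∈ B ↔ q ∈ B) (hB : ∀ M, ∀ᶠ d in farRight Y M, χinv d ∈ B)
    (hentry : ∀ q ∈ B, ∃ M, Tendsto (fun n => χ (G^[n] q)) atTop (farRight Y M)) :
    ∃ Ψ, IsBiholomorphicOn (fatouLimit β (χ ∘ G ∘ χinv) ∘ χ) Ψ B univ := by
  choose R S hS hVopen hsurj hR using fun M => hT.exists_rightDomain hη M ((hdiff M).and (hB M))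
  set T := χ ∘ G ∘ χinv with hTdef
  have hsemi : Function.Semiconj χ G T := fun q => by simp [hTdef, hχ q]
  let D : ℝ → Set (ℂ × Y) := fun M => rightDomain Y (R M) M
  have hχD : ∀ M, ∀ q ∈ χ ⁻¹' D M, DifferentiableAt ℂ χ q := fun M q hq => by
    simpa only [hχ q] using (hR M _ hq).2.1.2
  have hcharts : ∀ M, IsBiholomorphicOn χ χinv (χ ⁻¹' D M) (D M) := fun M =>
    .of_leftInverse_rightInverse hχ hχinv (fun q hq => (hχD M q hq).differentiableWithinAt)
      fun d hd => (hR M d hd).2.1.1.differentiableWithinAt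
  refine IsBiholomorphicOn.exists_of_iterate (e := (1, 0)) hG (fun M => (hcharts M).trans (hS M))
    (fun M => ?_) hVopen (fun M n q hq => ?_) hGB (fun M q hq => ?_) (fun p hp q hq => ?_)
    fun ξ => ?_
  · exact isOpen_iff_mem_nhds.2 fun q hq => (hχD M q hq).continuousAt.preimage_mem_nhds
      ((isOpen_rightDomain _ _).mem_nhds hq)
  · have heq := hsemi.iterate_right n q
    simpa [heq] using fatouLimit_iterate (hR M _ (heq ▸ hq)).1
  · exact hχ q ▸ (hR M _ hq).2.2
  · obtain ⟨M₁, h₁⟩ := hentry p hp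
    obtain ⟨M₂, h₂⟩ := hentry q hq
    exact ⟨_, exists_mem_rightDomain_of_tendsto_farRight h₁ h₂ (R (max M₁ M₂))⟩
  · obtain ⟨n, hn⟩ := hsurj (‖ξ.2‖ + 2) ξ (by linarith)
    exact ⟨_, n, by simpa using hn⟩

end IsTranslationPerturbation

end TranslationPerturbation

section SecondOrder

variable {E F : Type*} [NormedAddCommGroup E] [NormedSpace ℂ E]
  [NormedAddCommGroup F] [NormedSpace ℂ F]

lemma isBigO_sub_sub_fderiv_zero {f : E → F} (hf : ContDiffAt ℂ 2 f 0) :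
    (fun p : E × E => f p.1 - f p.2 - fderiv ℂ f 0 (p.1 - p.2))
      =O[𝓝 0] fun p => ‖p‖ * ‖p.1 - p.2‖ := by
  let : NormedSpace ℝ E := NormedSpace.restrictScalars ℝ ℂ E
  obtain ⟨C, t, ht, hlip⟩ :=
    (hf.fderiv_right (m := 1) (by norm_num)).exists_lipschitzOnWith
  obtain ⟨r, hr, hball⟩ := Metric.mem_nhds_iff.1
    (inter_mem ht ((hf.eventually (by simp)).mono fun y hy => hy.differentiableAt (by norm_num)))
  refine IsBigO.of_bound C ?_
  filter_upwards [Metric.ball_mem_nhds (0 : E × E) hr] with p hp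
  rw [mem_ball_zero_iff] at hp
  have hmem : ∀ y ∈ Metric.closedBall (0 : E) ‖p‖, y ∈ Metric.ball (0 : E) r := fun y hy =>
    mem_ball_zero_iff.2 ((mem_closedBall_zero_iff.1 hy).trans_lt hp)
  have h := (convex_closedBall (0 : E) ‖p‖).norm_image_sub_le_of_norm_hasFDerivWithin_le'
    (f := f) (φ := fderiv ℂ f 0) (C := C * ‖p‖) (𝕜 := ℂ)
    (fun y hy => (hball (hmem y hy)).2.hasFDerivAt.hasFDerivWithinAt) (fun y hy => ?_)
    (mem_closedBall_zero_iff.2 (norm_snd_le p)) (mem_closedBall_zero_iff.2 (norm_fst_le p))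
  · simpa [mul_assoc] using h
  · refine (hlip.norm_sub_le (hball (hmem y hy)).1 (mem_of_mem_nhds ht)).trans ?_
    rw [sub_zero]
    gcongr
    exact mem_closedBall_zero_iff.1 hy

lemma isBigO_sub_sub_fderiv_zero_sq {f : E → F} (hf : ContDiffAt ℂ 2 f 0) :
    (fun x => f x - f 0 - fderiv ℂ f 0 x) =O[𝓝 0] fun x => ‖x‖ ^ 2 := by
  have hpair : Tendsto (fun x : E => (x, (0 : E))) (𝓝 0) (𝓝 0) :=
    (continuous_id.prodMk continuous_const).tendsto' _ _ rfl
  simpa [Function.comp_def, Prod.norm_def, sq] using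
    (isBigO_sub_sub_fderiv_zero hf).comp_tendsto hpair

end SecondOrder

section PlanarMap

lemma isBiholomorphicOn_planarShear (c : ℂ) :
    IsBiholomorphicOn (fun q : ℂ × ℂ => (q.1, q.2 + c * q.1)) (fun q => (q.1, q.2 - c * q.1))
      univ univ where
  differentiableOn := by fun_prop
  differentiableOn_inv := by fun_prop
  mapsTo := mapsTo_univ _ _
  mapsTo_inv := mapsTo_univ _ _
  invOn := ⟨fun q _ => by simp, fun q _ => by simp⟩

lemma isBiholomorphicOn_planarOvershear (c : ℂ) :
    IsBiholomorphicOn (fun q : ℂ × ℂ => (q.1 * exp (c * q.2), q.2))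
      (fun q => (q.1 * exp (-(c * q.2)), q.2)) univ univ where
  differentiableOn := by fun_prop
  differentiableOn_inv := by fun_prop
  mapsTo := mapsTo_univ _ _
  mapsTo_inv := mapsTo_univ _ _
  invOn := ⟨fun q _ => by simp [mul_assoc, ← Complex.exp_add],
    fun q _ => by simp [mul_assoc, ← Complex.exp_add]⟩

lemma isBiholomorphicOn_planarAffineOvershear (c : ℂ) :
    IsBiholomorphicOn (fun q : ℂ × ℂ => (q.1, q.2 * exp (-(c * q.1)) + q.1 ^ 2))
      (fun q => (q.1, (q.2 - q.1 ^ 2) * exp (c * q.1))) univ univ where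
  differentiableOn := by fun_prop
  differentiableOn_inv := by fun_prop
  mapsTo := mapsTo_univ _ _
  mapsTo_inv := mapsTo_univ _ _
  invOn := ⟨fun q _ => by simp [mul_assoc, ← Complex.exp_add],
    fun q _ => by simp [mul_assoc, ← Complex.exp_add]⟩

/-- The exponential factor `E = exp (ω - v)`, through which the planar map depends on `ω`. -/
noncomputable def expDiff (q : ℂ × ℂ) : ℂ := exp (q.2 - q.1)

/-- The planar automorphism `(v, ω) ↦ (v₁, (ω - v + vE) exp (-(1 + γ) v₁) + v₁²)` with
`v₁ = v exp (-vE)`, which `F` induces in the variables `v = 2a zt`, `ω = 2a w` for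
`γ = c / (2a)`. -/
noncomputable def planarMap (γ : ℂ) (q : ℂ × ℂ) : ℂ × ℂ :=
  (q.1 * exp (-(q.1 * expDiff q)),
    (q.2 - q.1 + q.1 * expDiff q) * exp (-((1 + γ) * (q.1 * exp (-(q.1 * expDiff q))))) +
      (q.1 * exp (-(q.1 * expDiff q))) ^ 2)

lemma exists_isBiholomorphicOn_planarMap (γ : ℂ) :
    ∃ Ginv, IsBiholomorphicOn (planarMap γ) Ginv univ univ := by
  have h := ((((isBiholomorphicOn_planarShear (-1)).trans
    (isBiholomorphicOn_planarOvershear 1)).trans (isBiholomorphicOn_planarShear 1)).trans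
      (isBiholomorphicOn_planarOvershear (-1))).trans
        (isBiholomorphicOn_planarAffineOvershear (1 + γ))
  have hfst : ∀ v ω : ℂ, v * exp (-(v * exp (ω - v))) =
      v * exp (ω - v) * exp (-(ω - v + v * exp (ω - v))) := fun v ω => by
    rw [mul_assoc, ← Complex.exp_add]
    ring_nf
  exact ⟨_, by
    convert h using 1
    ext ⟨v, ω⟩ <;>
    simp only [planarMap, expDiff, hfst, Function.comp_apply, one_mul, neg_one_mul,
      ← sub_eq_add_neg]⟩

lemma inv_planarMap_fst (γ : ℂ) (q : ℂ × ℂ) :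
    (planarMap γ q).1⁻¹ = q.1⁻¹ * exp (q.1 * expDiff q) := by
  rw [planarMap, mul_inv, ← Complex.exp_neg, neg_neg]

lemma planarMap_fst_ne_zero {γ : ℂ} {q : ℂ × ℂ} : (planarMap γ q).1 ≠ 0 ↔ q.1 ≠ 0 := by
  simp [planarMap, Complex.exp_ne_zero]

/-- With `(v₁, ω₁) = planarMap γ (v, ω)`, the distance `(v₁ / v) ^ (-γ) * (ω₁ - v₁² h(v₁))` of the
image point to the curve `ω = v² h(v)`, normalized to be close to `ω` to second order. -/
noncomputable def curveDist (γ : ℂ) (h : ℂ → ℂ) (q : ℂ × ℂ) : ℂ :=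
  exp (γ * (q.1 * expDiff q)) *
    ((planarMap γ q).2 - (planarMap γ q).1 ^ 2 * h (planarMap γ q).1)

lemma hasFDerivAt_expDiff :
    HasFDerivAt expDiff (ContinuousLinearMap.snd ℂ ℂ ℂ - ContinuousLinearMap.fst ℂ ℂ ℂ) 0 := by
  have h := (hasFDerivAt_snd (𝕜 := ℂ) (p := (0 : ℂ × ℂ))).sub hasFDerivAt_fst
  exact h.cexp.congr_fderiv (by simp)

lemma tendsto_expDiff : Tendsto expDiff (𝓝 0) (𝓝 1) := by
  simpa [expDiff] using hasFDerivAt_expDiff.continuousAt.tendsto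

lemma contDiff_expDiff {n : WithTop ℕ∞} : ContDiff ℂ n expDiff := by
  unfold expDiff
  fun_prop

lemma contDiff_dslope_exp {n : WithTop ℕ∞} : ContDiff ℂ n (dslope exp 0) :=
  (differentiableOn_univ.1 ((Complex.differentiableOn_dslope univ_mem).2
    Complex.differentiable_exp.differentiableOn)).contDiff

lemma mul_dslope_exp (z : ℂ) : z * dslope exp 0 z = exp z - 1 := by
  simpa using sub_smul_dslope exp 0 z

lemma hasFDerivAt_clm_mul {E : Type*} [NormedAddCommGroup E] [NormedSpace ℂ E] (L : E →L[ℂ] ℂ)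
    {f : E → ℂ} (hf : DifferentiableAt ℂ f 0) :
    HasFDerivAt (fun q => L q * f q) (f 0 • L) 0 :=
  (L.hasFDerivAt.mul hf.hasFDerivAt).congr_fderiv (by ext; simp)

lemma curveDist_eq_exp_mul_add (γ : ℂ) (h : ℂ → ℂ) (q : ℂ × ℂ) :
    curveDist γ h q = (q.2 - q.1 + q.1 * expDiff q) *
        exp (q.1 * (γ * expDiff q - (1 + γ) * exp (-(q.1 * expDiff q)))) +
      q.1 ^ 2 * (exp ((γ - 2) * (q.1 * expDiff q)) * (1 - h (q.1 * exp (-(q.1 * expDiff q))))) := by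
  have hexp : exp (q.1 * (γ * expDiff q - (1 + γ) * exp (-(q.1 * expDiff q)))) =
      exp (γ * (q.1 * expDiff q)) * exp (-((1 + γ) * (q.1 * exp (-(q.1 * expDiff q))))) := by
    rw [← Complex.exp_add]
    congr 1
    ring
  have hexp2 : exp ((γ - 2) * (q.1 * expDiff q)) =
      exp (γ * (q.1 * expDiff q)) * exp (-(q.1 * expDiff q)) ^ 2 := by
    rw [← Complex.exp_nat_mul, ← Complex.exp_add]
    congr 1
    push_cast
    ring
  simp only [curveDist, planarMap, hexp, hexp2]
  ring

/-- The terms of the remainder that are linear in `ω` cancel: this is what makes the Fatou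
coordinates of the planar map converge. -/
lemma exists_curveDist_eq (γ : ℂ) {h : ℂ → ℂ} (hh : Differentiable ℂ h) :
    ∃ P : ℂ × ℂ → ℂ, ContDiff ℂ 2 P ∧ (∀ q, curveDist γ h q = q.2 + q.1 * P q) ∧ P 0 = 0 ∧
      fderiv ℂ P 0 = -h 0 • ContinuousLinearMap.fst ℂ ℂ ℂ := by
  let k : ℂ × ℂ → ℂ := fun q => γ * expDiff q - (1 + γ) * exp (-(q.1 * expDiff q))
  let m : ℂ × ℂ → ℂ := fun q =>
    exp ((γ - 2) * (q.1 * expDiff q)) * (1 - h (q.1 * exp (-(q.1 * expDiff q))))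
  have hE : ContDiff ℂ 2 expDiff := contDiff_expDiff
  have hφ : ContDiff ℂ 2 (dslope exp 0) := contDiff_dslope_exp
  have hh2 : ContDiff ℂ 2 h := hh.contDiff
  have hk : ContDiff ℂ 2 k := by fun_prop
  have hm : ContDiff ℂ 2 m := by fun_prop
  have hkφ : ContDiff ℂ 2 fun q : ℂ × ℂ => k q * dslope exp 0 (q.1 * k q) := by fun_prop
  have hexp : ContDiff ℂ 2 fun q : ℂ × ℂ => exp (q.1 * k q) := by fun_prop
  have h2 : (2 : WithTop ℕ∞) ≠ 0 := by norm_num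
  refine ⟨fun q => (expDiff q - 1) * exp (q.1 * k q) + q.2 * (k q * dslope exp 0 (q.1 * k q)) +
    q.1 * m q, by fun_prop, fun q => ?_, by simp [expDiff], ?_⟩
  · have hcurve := curveDist_eq_exp_mul_add γ h q
    have hslope := mul_dslope_exp (q.1 * k q)
    linear_combination hcurve - q.2 * hslope
  · have hd := (((hasFDerivAt_expDiff.sub_const 1).mul
      (hexp.differentiable h2 0).hasFDerivAt).add
        (hasFDerivAt_clm_mul (.snd ℂ ℂ ℂ) (hkφ.differentiable h2 0))).add
          (hasFDerivAt_clm_mul (.fst ℂ ℂ ℂ) (hm.differentiable h2 0))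
    refine hd.fderiv.trans ?_
    simp only [expDiff, Prod.snd_zero, Prod.fst_zero, sub_self, Complex.exp_zero, mul_one, neg_zero,
      sub_add_cancel_right, mul_neg, one_smul, dslope_same, Complex.deriv_exp, mul_zero, one_mul, k,
      m]
    module

end PlanarMap

section LeadingCoefficient

variable {𝕜 : Type*} [NontriviallyNormedField 𝕜]

lemma natCast_le_analyticOrderAt_of_isBigO {f : 𝕜 → 𝕜} {z : 𝕜} (hf : AnalyticAt 𝕜 f z) {n : ℕ}
    (hO : f =O[𝓝 z] fun x => (x - z) ^ n) : (n : ℕ∞) ≤ analyticOrderAt f z := by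
  by_contra! hlt
  obtain ⟨m, hm⟩ := ENat.ne_top_iff_exists.1 hlt.ne_top
  rw [← hm, Nat.cast_lt] at hlt
  obtain ⟨g, hg, hg0, hfg⟩ := hf.analyticOrderAt_eq_natCast.1 hm.symm
  have hgO : g =O[𝓝[≠] z] fun x => (x - z) ^ (n - m) := by
    refine (((isBigO_refl (fun x => ((x - z) ^ m)⁻¹) _).mul
      (hO.mono nhdsWithin_le_nhds)).congr' ?_ ?_)
    · filter_upwards [hfg.filter_mono nhdsWithin_le_nhds, self_mem_nhdsWithin] with x hx hne
      rw [hx, smul_eq_mul, inv_mul_cancel_left₀ (pow_ne_zero m (sub_ne_zero.2 hne))]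
    · filter_upwards [self_mem_nhdsWithin] with x hne
      rw [pow_sub₀ _ (sub_ne_zero.2 hne) hlt.le, mul_comm]
  have hpow : Tendsto (fun x => (x - z) ^ (n - m)) (𝓝[≠] z) (𝓝 0) := by
    refine Tendsto.mono_left (Continuous.tendsto' (by fun_prop) _ _ ?_) nhdsWithin_le_nhds
    rw [sub_self, zero_pow (Nat.sub_ne_zero_of_lt hlt)]
  exact hg0 (tendsto_nhds_unique (hg.continuousAt.tendsto.mono_left nhdsWithin_le_nhds)
    (hgO.trans_tendsto hpow))

lemma exists_sub_isBigO_pow_succ {f : 𝕜 → 𝕜} (hf : AnalyticAt 𝕜 f 0) {n : ℕ}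
    (hO : f =O[𝓝 0] fun x => x ^ n) :
    ∃ ε, (fun x => f x - ε * x ^ n) =O[𝓝 0] fun x => x ^ (n + 1) := by
  obtain ⟨g, hg, hfg⟩ := (natCast_le_analyticOrderAt hf).1
    (natCast_le_analyticOrderAt_of_isBigO hf (by simpa using hO))
  refine ⟨g 0, ((isBigO_refl (fun x : 𝕜 => x ^ n) _).mul hg.differentiableAt.isBigO_sub).congr'
    ?_ (Eventually.of_forall fun x => ?_)⟩
  · filter_upwards [hfg] with x hx
    rw [hx, sub_zero, smul_eq_mul]
    ring
  · simp [pow_succ]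

end LeadingCoefficient

section Defect

lemma curveDist_sub_isBigO (γ : ℂ) {h : ℂ → ℂ} (hh : Differentiable ℂ h) :
    (fun p : ℂ × ℂ × ℂ => curveDist γ h (p.1, p.2.1) - curveDist γ h (p.1, p.2.2) -
      (p.2.1 - p.2.2)) =O[𝓝 0] fun p => ‖p.1‖ * (‖p‖ * ‖p.2.1 - p.2.2‖) := by
  obtain ⟨P, hP, hcurve, -, hfderiv⟩ := exists_curveDist_eq γ hh
  have hpair : Tendsto (fun p : ℂ × ℂ × ℂ => ((p.1, p.2.1), (p.1, p.2.2))) (𝓝 0) (𝓝 0) :=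
    Continuous.tendsto' (by fun_prop) _ _ rfl
  have hO := (isBigO_sub_sub_fderiv_zero hP.contDiffAt).comp_tendsto hpair
  refine ((isBigO_refl (fun p : ℂ × ℂ × ℂ => p.1) _).norm_right.mul hO).congr
    (fun p => ?_) fun p => ?_
  · simp only [hcurve, hfderiv, Function.comp_apply, Prod.mk_sub_mk, sub_self, smul_apply,
      ContinuousLinearMap.coe_fst', smul_eq_mul, mul_zero, sub_zero]
    ring
  · simp [Prod.norm_def, max_max_max_comm]

lemma curveDist_zero_sub_isBigO (γ : ℂ) :
    (fun q => curveDist γ 0 q - q.2) =O[𝓝 0] fun q => ‖q.1‖ * ‖q‖ ^ 2 := by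
  obtain ⟨P, hP, hcurve, hP0, hfderiv⟩ := exists_curveDist_eq γ (differentiable_const 0)
  refine ((isBigO_refl (fun q : ℂ × ℂ => q.1) _).norm_right.mul
    (isBigO_sub_sub_fderiv_zero_sq hP.contDiffAt)).congr_left fun q => ?_
  have hq : curveDist γ 0 q = q.2 + q.1 * P q := hcurve q
  simp [hq, hP0, hfderiv]

/-- The failure of the curve `ω = v² h(v)` to be invariant under the planar map. -/
noncomputable def defect (γ : ℂ) (h : ℂ → ℂ) (v : ℂ) : ℂ := curveDist γ h (v, v ^ 2 * h v)

lemma differentiable_curveDist (γ : ℂ) {h : ℂ → ℂ} (hh : Differentiable ℂ h) :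
    Differentiable ℂ (curveDist γ h) := by
  unfold curveDist planarMap expDiff
  fun_prop

lemma differentiable_defect (γ : ℂ) {h : ℂ → ℂ} (hh : Differentiable ℂ h) :
    Differentiable ℂ (defect γ h) := by
  have hcurve := differentiable_curveDist γ hh
  unfold defect
  fun_prop

lemma defect_zero_isBigO (γ : ℂ) : defect γ 0 =O[𝓝 0] fun v => v ^ 3 := by
  have hpair : Tendsto (fun v : ℂ => (v, (0 : ℂ))) (𝓝 0) (𝓝 0) :=
    Continuous.tendsto' (by fun_prop) _ _ rfl
  refine (((curveDist_zero_sub_isBigO γ).comp_tendsto hpair).congr (fun v => ?_)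
    fun v => ?_).of_norm_right
  · simp [defect]
  · simp only [Function.comp_apply, Prod.norm_mk, norm_zero, norm_nonneg, sup_of_le_left, norm_pow]
    ring

lemma curveDist_add_monomial (γ : ℂ) (h : ℂ → ℂ) (β : ℂ) (J : ℕ) (q : ℂ × ℂ) :
    curveDist γ (fun v => h v + β * v ^ J) q =
      curveDist γ h q - β * q.1 ^ (J + 2) * exp ((γ - (J + 2)) * (q.1 * expDiff q)) := by
  have hexp : exp ((γ - (J + 2)) * (q.1 * expDiff q)) =
      exp (γ * (q.1 * expDiff q)) * exp (-(q.1 * expDiff q)) ^ (J + 2) := by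
    rw [← Complex.exp_nat_mul, ← Complex.exp_add]
    congr 1
    push_cast
    ring
  simp only [curveDist, planarMap, hexp]
  ring

lemma exp_mul_expDiff_sub_isBigO (σ : ℂ) {f : ℂ → ℂ} (hf : Differentiable ℂ f) (hf0 : f 0 = 0) :
    (fun v => exp (σ * (v * expDiff (v, f v))) - 1 - σ * v) =O[𝓝 0] fun v => v ^ 2 := by
  have hexp : ContDiff ℂ 2 fun v => exp (σ * (v * expDiff (v, f v))) := by
    have hf2 : ContDiff ℂ 2 f := hf.contDiff
    unfold expDiff
    fun_prop
  have hE : Differentiable ℂ fun v => expDiff (v, f v) := by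
    unfold expDiff
    fun_prop
  have hderiv : HasDerivAt (fun v => exp (σ * (v * expDiff (v, f v)))) σ 0 := by
    refine (((hasDerivAt_id (0 : ℂ)).mul (hE 0).hasDerivAt).const_mul σ).cexp.congr_deriv ?_
    simp [expDiff, hf0]
  refine ((isBigO_sub_sub_fderiv_zero_sq hexp.contDiffAt).congr (fun v => ?_)
    fun v => (norm_pow v 2).symm).of_norm_right
  simp [hderiv.hasFDerivAt.fderiv, mul_comm]

/-- Away from the resonance `γ = J + 2`, adding a monomial to `h` removes the leading term of the
defect. -/
lemma defect_add_monomial_isBigO (γ : ℂ) {h : ℂ → ℂ} (hh : Differentiable ℂ h) (β : ℂ) (J : ℕ) :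
    (fun v => defect γ (fun v => h v + β * v ^ J) v -
      (defect γ h v - (γ - (J + 2)) * β * v ^ (J + 3))) =O[𝓝 0] fun v => v ^ (J + 4) := by
  let f : ℂ → ℂ := fun v => v ^ 2 * (h v + β * v ^ J)
  have hf : Differentiable ℂ f := by fun_prop
  have hexp := (isBigO_refl (fun v : ℂ => β * v ^ (J + 2)) (𝓝 0)).mul
    (exp_mul_expDiff_sub_isBigO (γ - (J + 2)) hf (by simp [f]))
  let p : ℂ → ℂ × ℂ × ℂ := fun v => (v, f v, v ^ 2 * h v)
  have hp : Differentiable ℂ p := by fun_prop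
  have hp0 : p 0 = 0 := by simp [p, f]
  have hpO : p =O[𝓝 0] fun v => v := by simpa [hp0] using (hp 0).isBigO_sub
  have hmonomial : ∀ v, f v - v ^ 2 * h v = β * v ^ (J + 2) := fun v => by simp only [f]; ring
  have hpow : (fun v => f v - v ^ 2 * h v) =O[𝓝 0] fun v => v ^ (J + 2) := by
    simp only [hmonomial]
    exact isBigO_const_mul_self _ _ _
  have hdist : (fun v => curveDist γ h (v, f v) - curveDist γ h (v, v ^ 2 * h v) -
      (f v - v ^ 2 * h v)) =O[𝓝 0] fun v => v * (v * v ^ (J + 2)) :=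
    ((curveDist_sub_isBigO γ hh).comp_tendsto (hp.continuous.tendsto' 0 0 hp0)).trans
      ((isBigO_refl (fun v : ℂ => v) _).norm_left.mul (hpO.norm_left.mul hpow.norm_left))
  refine ((hdist.congr_right fun v => ?_).sub
    ((hexp.trans (isBigO_of_le' (c := ‖β‖) _ fun v => ?_)))).congr_left fun v => ?_
  · ring
  · rw [← norm_mul]
    exact le_of_eq (congrArg _ (by ring))
  · have hcurve := curveDist_add_monomial γ h β J (v, f v)
    simp only [hmonomial, defect] at hcurve ⊢
    change _ = curveDist γ (fun v => h v + β * v ^ J) (v, f v) - _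
    rw [hcurve]
    ring

lemma exists_defect_isBigO (γ : ℂ) (J : ℕ) (hγ : ∀ j < J, γ ≠ j + 2) :
    ∃ h, Differentiable ℂ h ∧ defect γ h =O[𝓝 0] fun v => v ^ (J + 3) := by
  induction J with
  | zero => exact ⟨0, differentiable_const 0, defect_zero_isBigO γ⟩
  | succ J ih =>
    obtain ⟨h, hh, hO⟩ := ih fun j hj => hγ j (hj.trans J.lt_succ_self)
    obtain ⟨ε, hε⟩ := exists_sub_isBigO_pow_succ ((differentiable_defect γ hh).analyticAt 0) hO
    have hne : γ - (J + 2) ≠ 0 := sub_ne_zero.2 (hγ J J.lt_succ_self)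
    obtain ⟨β, hβ⟩ : ∃ β, (γ - (J + 2)) * β = ε := ⟨_, mul_div_cancel₀ ε hne⟩
    refine ⟨fun v => h v + β * v ^ J, by fun_prop, ?_⟩
    refine ((defect_add_monomial_isBigO γ hh β J).add hε).congr_left fun v => ?_
    rw [hβ]
    ring

end Defect

section NormalForm

lemma norm_exp_mul_log (γ : ℝ) {x : ℂ} (hx : x ≠ 0) : ‖exp (γ * log x)‖ = ‖x‖ ^ γ := by
  rw [Complex.norm_exp, Complex.re_ofReal_mul, Complex.log_re,
    Real.rpow_def_of_pos (norm_pos_iff.2 hx), mul_comm]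

lemma exp_mul_log_mul_isBigO (γ : ℝ) {f : ℂ → ℂ} {n : ℕ} (hf : f =O[𝓝 0] fun v => v ^ n) :
    (fun x => exp (γ * log x) * f x⁻¹) =O[Bornology.cobounded ℂ] fun x => ‖x‖ ^ (γ - n) := by
  have hexp : (fun x : ℂ => exp (γ * log x)) =O[Bornology.cobounded ℂ] fun x => ‖x‖ ^ γ := by
    refine IsBigO.of_bound 1 ?_
    filter_upwards [Bornology.eventually_ne_cobounded 0] with x hx
    rw [norm_exp_mul_log γ hx, one_mul, Real.norm_of_nonneg (by positivity)]
  refine (hexp.mul (hf.comp_tendsto tendsto_inv₀_cobounded).norm_right).congr'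
    EventuallyEq.rfl ?_
  filter_upwards [Bornology.eventually_ne_cobounded 0] with x hx
  rw [Function.comp_apply, norm_pow, norm_inv, inv_pow, Real.rpow_sub (norm_pos_iff.2 hx),
    Real.rpow_natCast, div_eq_mul_inv]

lemma rpow_norm_isBigO_cobounded {s t : ℝ} (hst : s ≤ t) :
    (fun x : ℂ => ‖x‖ ^ s) =O[Bornology.cobounded ℂ] fun x => ‖x‖ ^ t := by
  refine IsBigO.of_bound 1 ?_
  filter_upwards [tendsto_norm_cobounded_atTop.eventually_ge_atTop 1] with x hx
  rw [one_mul, Real.norm_of_nonneg (by positivity), Real.norm_of_nonneg (by positivity)]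
  exact Real.rpow_le_rpow_of_exponent_le hx hst

/-- The curve `ω = v² h(v)` is invariant under the planar map up to the error `κ v ^ (γ + 1)` and
terms of higher order. The power `x ^ γ` is written `exp (γ log x)`, so that it is invertible at
`x = 0` as well. -/
structure IsNormalForm (γ : ℝ) (h : ℂ → ℂ) (κ : ℂ) (η : ℝ) : Prop where
  differentiable : Differentiable ℂ h
  pos : 0 < η
  le_half : η ≤ 1 / 2
  le : 1 + 2 * η ≤ γ
  isBigO : (fun x => exp (γ * log x) * defect γ h x⁻¹ - κ * x⁻¹)
    =O[Bornology.cobounded ℂ] fun x => ‖x‖ ^ (-(1 + η))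

lemma exists_isNormalForm {γ : ℝ} (hγ : 1 < γ) : ∃ h κ η, IsNormalForm γ h κ η := by
  obtain ⟨J, hJ⟩ : ∃ J, ⌈γ⌉₊ = J + 2 :=
    Nat.exists_eq_add_of_le' (Nat.lt_ceil.2 (by exact_mod_cast hγ))
  have hle : γ ≤ J + 2 := by exact_mod_cast hJ ▸ Nat.le_ceil γ
  obtain ⟨h, hh, hO⟩ := exists_defect_isBigO γ J fun j hj heq => by
    have hγj : γ = (j + 2 : ℕ) := by exact_mod_cast heq
    rw [hγj, Nat.ceil_natCast] at hJ
    omega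
  rcases hle.eq_or_lt with hres | hlt
  · obtain ⟨ε, hε⟩ := exists_sub_isBigO_pow_succ ((differentiable_defect γ hh).analyticAt 0) hO
    refine ⟨h, ε, min (1 / 2) ((γ - 1) / 2), hh, lt_min one_half_pos (by linarith),
      min_le_left _ _, by linarith [min_le_right (1 / 2) ((γ - 1) / 2)], ?_⟩
    refine ((exp_mul_log_mul_isBigO γ hε).trans (rpow_norm_isBigO_cobounded ?_)).congr' ?_
      EventuallyEq.rfl
    · push_cast
      linarith [min_le_left (1 / 2) ((γ - 1) / 2)]
    · filter_upwards [Bornology.eventually_ne_cobounded 0] with x hx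
      have hexp : exp (γ * log x) = x ^ (J + 2) := by
        have hcast : (γ : ℂ) = (J + 2 : ℕ) := by exact_mod_cast hres
        rw [hcast, Complex.exp_nat_mul, Complex.exp_log hx]
      rw [hexp, mul_sub, inv_pow]
      congr 1
      field_simp
      ring
  · refine ⟨h, 0, min (min (1 / 2) ((γ - 1) / 2)) (J + 2 - γ), hh,
      lt_min (lt_min one_half_pos (by linarith)) (by linarith),
      (min_le_left _ _).trans (min_le_left _ _), ?_, ?_⟩
    · linarith [(min_le_left (min (1 / 2) ((γ - 1) / 2)) (J + 2 - γ)).trans (min_le_right _ _)]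
    · simp only [zero_mul, sub_zero]
      refine (exp_mul_log_mul_isBigO γ hO).trans (rpow_norm_isBigO_cobounded ?_)
      push_cast
      linarith [min_le_right (min (1 / 2) ((γ - 1) / 2)) (J + 2 - γ)]

end NormalForm

section Cusp

/-- The filter of `(v, ω) → 0` with `Re (1 / v) → +∞` and `‖ω‖ ≤ K ‖v‖`. -/
noncomputable def cusp (K : ℝ) : Filter (ℂ × ℂ) :=
  comap (fun q => q.1⁻¹.re) atTop ⊓ 𝓟 {q | ‖q.2‖ ≤ K * ‖q.1‖}

lemma tendsto_re_inv_fst_cusp (K : ℝ) : Tendsto (fun q : ℂ × ℂ => q.1⁻¹.re) (cusp K) atTop :=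
  tendsto_comap.mono_left inf_le_left

lemma tendsto_inv_fst_cusp (K : ℝ) :
    Tendsto (fun q : ℂ × ℂ => q.1⁻¹) (cusp K) (Bornology.cobounded ℂ) :=
  tendsto_norm_atTop_iff_cobounded.1
    (tendsto_atTop_mono (fun _ => Complex.re_le_norm _) (tendsto_re_inv_fst_cusp K))

lemma tendsto_fst_cusp (K : ℝ) : Tendsto Prod.fst (cusp K) (𝓝 0) := by
  simpa [Function.comp_def] using tendsto_inv₀_cobounded.comp (tendsto_inv_fst_cusp K)

lemma eventually_norm_snd_le_cusp (K : ℝ) : ∀ᶠ q in cusp K, ‖q.2‖ ≤ K * ‖q.1‖ :=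
  mem_inf_of_right (mem_principal_self _)

lemma eventually_fst_ne_zero_cusp (K : ℝ) : ∀ᶠ q in cusp K, q.1 ≠ 0 :=
  ((tendsto_inv_fst_cusp K).eventually (Bornology.eventually_ne_cobounded 0)).mono fun _ =>
    by simp

lemma norm_isBigO_fst_cusp (K : ℝ) : (fun q => ‖q‖) =O[cusp K] Prod.fst := by
  refine IsBigO.norm_left ?_
  exact (isBigO_refl _ _).prod_left (IsBigO.of_bound K (eventually_norm_snd_le_cusp K))

lemma cusp_le_nhds (K : ℝ) : cusp K ≤ 𝓝 0 :=
  tendsto_id'.1 ((norm_isBigO_fst_cusp K).of_norm_left.trans_tendsto (tendsto_fst_cusp K))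

lemma norm_inv_rpow_neg (v : ℂ) (s : ℝ) : ‖v⁻¹‖ ^ (-s) = ‖v‖ ^ s := by
  rw [norm_inv, Real.inv_rpow (norm_nonneg v), Real.rpow_neg (norm_nonneg v), inv_inv]

lemma rpow_norm_fst_isBigO_cusp {s t : ℝ} (hst : s ≤ t) (K : ℝ) :
    (fun q => ‖q.1‖ ^ t) =O[cusp K] fun q => ‖q.1‖ ^ s :=
  ((rpow_norm_isBigO_cobounded (neg_le_neg hst)).comp_tendsto (tendsto_inv_fst_cusp K)).congr
    (fun q => norm_inv_rpow_neg q.1 t)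
    fun q => norm_inv_rpow_neg q.1 s

end Cusp

section Displacement

/-- The displacement of `1 / v` under the planar map. -/
noncomputable def inversionStep (q : ℂ × ℂ) : ℂ :=
  expDiff q * dslope exp 0 (q.1 * expDiff q)

lemma inv_planarMap_fst_sub (γ : ℂ) {q : ℂ × ℂ} (hq : q.1 ≠ 0) :
    (planarMap γ q).1⁻¹ - q.1⁻¹ = inversionStep q := by
  have h := mul_dslope_exp (q.1 * expDiff q)
  rw [inv_planarMap_fst, inversionStep]
  field_simp
  linear_combination -h

lemma contDiff_inversionStep {n : WithTop ℕ∞} : ContDiff ℂ n inversionStep := by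
  have hE : ContDiff ℂ n expDiff := contDiff_expDiff
  have hφ : ContDiff ℂ n (dslope exp 0) := contDiff_dslope_exp
  unfold inversionStep
  fun_prop

lemma inversionStep_zero : inversionStep 0 = 1 := by
  simp [inversionStep, expDiff]

lemma tendsto_inversionStep : Tendsto inversionStep (𝓝 0) (𝓝 1) :=
  contDiff_inversionStep.continuous (n := 0).tendsto' _ _ inversionStep_zero

lemma hasDerivAt_dslope_exp : HasDerivAt (dslope exp 0) (1 / 2) 0 := by
  have hexp : HasFPowerSeriesAt exp (NormedSpace.expSeries ℂ ℂ) 0 := by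
    rw [Complex.exp_eq_exp_ℂ]
    exact NormedSpace.exp_hasFPowerSeriesAt_zero
  refine (hexp.has_fpower_series_dslope_fslope).hasDerivAt.congr_deriv ?_
  change (NormedSpace.expSeries ℂ ℂ).fslope.coeff 1 = 1 / 2
  rw [FormalMultilinearSeries.coeff_fslope]
  change NormedSpace.expSeries ℂ ℂ 2 (fun _ => 1) = 1 / 2
  rw [NormedSpace.expSeries_apply_eq]
  simp

lemma inversionStep_sub_isBigO :
    (fun q => inversionStep q - 1 - (q.2 - q.1 / 2)) =O[𝓝 0] fun q => ‖q‖ ^ 2 := by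
  have hmul : HasFDerivAt (fun q : ℂ × ℂ => q.1 * expDiff q) (.fst ℂ ℂ ℂ) 0 :=
    (hasFDerivAt_clm_mul (.fst ℂ ℂ ℂ) hasFDerivAt_expDiff.differentiableAt).congr_fderiv
      (by simp [expDiff])
  have hslope : HasFDerivAt (fun q : ℂ × ℂ => dslope exp 0 (q.1 * expDiff q))
      ((1 / 2 : ℂ) • .fst ℂ ℂ ℂ) 0 :=
    hasDerivAt_dslope_exp.comp_hasFDerivAt_of_eq 0 hmul (by simp)
  have hfderiv : fderiv ℂ inversionStep 0 =
      .snd ℂ ℂ ℂ - (1 / 2 : ℂ) • .fst ℂ ℂ ℂ := by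
    refine (hasFDerivAt_expDiff.mul hslope).fderiv.trans ?_
    simp only [expDiff, Prod.snd_zero, Prod.fst_zero, sub_self, Complex.exp_zero, one_smul, mul_one,
      dslope_same, Complex.deriv_exp]
    module
  refine (isBigO_sub_sub_fderiv_zero_sq contDiff_inversionStep.contDiffAt).congr_left fun q => ?_
  simp only [inversionStep_zero, hfderiv, sub_apply, ContinuousLinearMap.coe_snd', smul_apply,
    ContinuousLinearMap.coe_fst', smul_eq_mul]
  ring

lemma expDiff_sub_one_isBigO_cusp (K : ℝ) : (fun q => expDiff q - 1) =O[cusp K] Prod.fst := by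
  have h := hasFDerivAt_expDiff.differentiableAt.isBigO_sub.mono (cusp_le_nhds K)
  simp only [sub_zero] at h
  exact (h.norm_right.trans (norm_isBigO_fst_cusp K)).congr_left fun q => by simp [expDiff]

/-- The leading terms of the displacement of `1 / v` and of `log (1 / v) / 2` in `v` cancel. -/
lemma inversionStep_add_isBigO_cusp (K : ℝ) :
    (fun q => inversionStep q - 1 + q.1 * expDiff q / 2)
      =O[cusp K] fun q => ‖q.1‖ ^ 2 + ‖q.2‖ := by
  have hq := norm_isBigO_fst_cusp K
  have hstep := (inversionStep_sub_isBigO.mono (cusp_le_nhds K)).trans (hq.pow 2)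
  have hsq : (fun q : ℂ × ℂ => q.1 ^ 2) =O[cusp K] fun q => ‖q.1‖ ^ 2 + ‖q.2‖ :=
    IsBigO.of_norm_le fun q => by rw [norm_pow]; linarith [norm_nonneg q.2]
  have hsnd : (fun q : ℂ × ℂ => q.2) =O[cusp K] fun q => ‖q.1‖ ^ 2 + ‖q.2‖ :=
    IsBigO.of_norm_le fun q => by linarith [sq_nonneg ‖q.1‖]
  have hmul : (fun q => 1 / 2 * (q.1 * (expDiff q - 1))) =O[cusp K] fun q => q.1 ^ 2 :=
    (((isBigO_refl Prod.fst _).mul (expDiff_sub_one_isBigO_cusp K)).const_mul_left _).congr_right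
      fun q => (sq q.1).symm
  refine (((hstep.add hmul).trans hsq).add hsnd).congr_left fun q => ?_
  ring

lemma log_mul_exp {x u : ℂ} (hx : 0 < x.re) (hu : ‖u‖ ≤ 1 / 2) : log (x * exp u) = log x + u := by
  have hx0 : x ≠ 0 := by
    rintro rfl
    exact hx.false
  have harg := abs_lt.1 (Complex.abs_arg_lt_pi_div_two_iff.2 (Or.inl hx))
  have him := abs_le.1 ((Complex.abs_im_le_norm u).trans hu)
  have hsum : (log x + u).im = x.arg + u.im := by rw [Complex.add_im, Complex.log_im]
  have hexp : x * exp u = exp (log x + u) := by rw [Complex.exp_add, Complex.exp_log hx0]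
  rw [hexp, Complex.log_exp] <;> rw [hsum] <;>
    linarith [harg.1, harg.2, him.1, him.2, Real.pi_gt_three]

lemma eventually_planarMap_cusp (γ : ℂ) (K : ℝ) : ∀ᶠ q in cusp K, 0 < (planarMap γ q).1⁻¹.re ∧
    log (planarMap γ q).1⁻¹ = log q.1⁻¹ + q.1 * expDiff q := by
  have hstep : Tendsto (fun q => (inversionStep q).re) (cusp K) (𝓝 1) :=
    (Complex.continuous_re.tendsto 1).comp (tendsto_inversionStep.mono_left (cusp_le_nhds K))
  have hmul : Tendsto (fun q => q.1 * expDiff q) (cusp K) (𝓝 0) := by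
    simpa using (tendsto_fst_cusp K).mul (tendsto_expDiff.mono_left (cusp_le_nhds K))
  filter_upwards [hstep.eventually_const_lt one_pos, eventually_fst_ne_zero_cusp K,
    (tendsto_re_inv_fst_cusp K).eventually_gt_atTop 0,
    hmul.eventually (Metric.closedBall_mem_nhds 0 one_half_pos)] with q hpos hq hre hu
  refine ⟨?_, ?_⟩
  · rw [← inv_planarMap_fst_sub γ hq, Complex.sub_re] at hpos
    linarith
  · rw [inv_planarMap_fst, log_mul_exp hre (mem_closedBall_zero_iff.1 hu)]

end Displacement

section CurveChart

lemma log_isBigO_cobounded {s : ℝ} (hs : 0 < s) :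
    log =O[Bornology.cobounded ℂ] fun x => ‖x‖ ^ s := by
  have hre : (fun x : ℂ => Real.log ‖x‖) =O[Bornology.cobounded ℂ] fun x => ‖x‖ ^ s :=
    (isLittleO_log_rpow_atTop hs).isBigO.comp_tendsto tendsto_norm_cobounded_atTop
  have him : (fun x : ℂ => x.arg) =O[Bornology.cobounded ℂ] fun x => ‖x‖ ^ s := by
    refine IsBigO.of_bound Real.pi ?_
    filter_upwards [tendsto_norm_cobounded_atTop.eventually_ge_atTop 1] with x hx
    refine (Complex.abs_arg_le_pi x).trans (le_mul_of_one_le_right Real.pi_nonneg ?_)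
    exact (Real.one_le_rpow hx hs.le).trans (le_abs_self _)
  refine ((Complex.isBigO_ofReal_left.2 hre).add
    ((Complex.isBigO_ofReal_left.2 him).const_mul_left Complex.I)).congr_left fun x => ?_
  rw [Complex.log, mul_comm Complex.I]

/-- The coordinates `x = 1 / v` and `y = x ^ γ (ω - v² h(v)) - κ log x`, in which the planar map is
close to a translation. -/
noncomputable def curveChart (γ : ℝ) (h : ℂ → ℂ) (κ : ℂ) (q : ℂ × ℂ) : ℂ × ℂ :=
  (q.1⁻¹, exp (γ * log q.1⁻¹) * (q.2 - q.1 ^ 2 * h q.1) - κ * log q.1⁻¹)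

/-- The inverse of `curveChart`. -/
noncomputable def curveChartInv (γ : ℝ) (h : ℂ → ℂ) (κ : ℂ) (d : ℂ × ℂ) : ℂ × ℂ :=
  (d.1⁻¹, d.1⁻¹ ^ 2 * h d.1⁻¹ + exp (-(γ * log d.1)) * (d.2 + κ * log d.1))

variable {γ : ℝ} {h : ℂ → ℂ} {κ : ℂ} {η : ℝ}

lemma leftInverse_curveChartInv (γ : ℝ) (h : ℂ → ℂ) (κ : ℂ) :
    Function.LeftInverse (curveChartInv γ h κ) (curveChart γ h κ) := fun q => by
  simp [curveChart, curveChartInv, ← mul_assoc, ← Complex.exp_add]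

lemma rightInverse_curveChartInv (γ : ℝ) (h : ℂ → ℂ) (κ : ℂ) :
    Function.RightInverse (curveChartInv γ h κ) (curveChart γ h κ) := fun d => by
  simp [curveChart, curveChartInv, ← mul_assoc, ← Complex.exp_add]

lemma differentiableAt_curveChart (hh : Differentiable ℂ h) {q : ℂ × ℂ} (hq : 0 < q.1⁻¹.re) :
    DifferentiableAt ℂ (curveChart γ h κ) q := by
  have hq0 : q.1 ≠ 0 := fun h0 => by simp [h0] at hq
  have hslit : q.1⁻¹ ∈ Complex.slitPlane := Or.inl hq
  unfold curveChart
  fun_prop (disch := assumption)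

lemma differentiableAt_curveChartInv (hh : Differentiable ℂ h) {d : ℂ × ℂ} (hd : 0 < d.1.re) :
    DifferentiableAt ℂ (curveChartInv γ h κ) d := by
  have hd0 : d.1 ≠ 0 := fun h0 => by simp [h0] at hd
  have hslit : d.1 ∈ Complex.slitPlane := Or.inl hd
  unfold curveChartInv
  fun_prop (disch := assumption)

lemma log_inv_fst_isBigO_cusp {s : ℝ} (hs : s < 0) (K : ℝ) :
    (fun q => log q.1⁻¹) =O[cusp K] fun q => ‖q.1‖ ^ s :=
  ((log_isBigO_cobounded (neg_pos.2 hs)).comp_tendsto (tendsto_inv_fst_cusp K)).congr_right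
    fun q => norm_inv_rpow_neg q.1 s

lemma exp_mul_sub_isBigO_cusp (γ : ℝ) (h : ℂ → ℂ) (κ : ℂ) {s : ℝ} (hs : s < 0) (K : ℝ) :
    (fun q => exp (γ * log q.1⁻¹) * (q.2 - q.1 ^ 2 * h q.1)) =O[cusp K]
      fun q => ‖q.1‖ ^ s * (1 + ‖(curveChart γ h κ q).2‖) := by
  have hone : (fun _ => (1 : ℝ)) =O[cusp K] fun q => ‖q.1‖ ^ s := by
    simpa using rpow_norm_fst_isBigO_cusp hs.le K
  have hY : (fun q => (curveChart γ h κ q).2) =O[cusp K]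
      fun q => 1 + ‖(curveChart γ h κ q).2‖ :=
    IsBigO.of_norm_le fun q => le_add_of_nonneg_left zero_le_one
  have hY1 : (fun _ => (1 : ℝ)) =O[cusp K] fun q => 1 + ‖(curveChart γ h κ q).2‖ :=
    IsBigO.of_norm_le fun q => by
      rw [norm_one]
      exact le_add_of_nonneg_right (norm_nonneg _)
  have hlog := ((log_inv_fst_isBigO_cusp hs K).const_mul_left κ).norm_left.mul hY1
  have hsum := (hone.mul hY.norm_left).add hlog
  simp only [one_mul, mul_one] at hsum
  refine (IsBigO.of_norm_le fun q => ?_).trans hsum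
  rw [← sub_add_cancel (exp _ * _) (κ * log q.1⁻¹)]
  exact norm_add_le _ _

lemma curveChart_planarMap_snd_sub {q : ℂ × ℂ}
    (hq : log (planarMap γ q).1⁻¹ = log q.1⁻¹ + q.1 * expDiff q) :
    (curveChart γ h κ (planarMap γ q)).2 - (curveChart γ h κ q).2 =
      exp (γ * log q.1⁻¹) * (curveDist γ h q - defect γ h q.1 - (q.2 - q.1 ^ 2 * h q.1)) +
        (exp (γ * log q.1⁻¹) * defect γ h q.1 - κ * q.1) - κ * (q.1 * (expDiff q - 1)) := by
  simp only [curveChart, curveDist, hq, mul_add, Complex.exp_add]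
  ring

lemma IsNormalForm.exp_mul_curveDist_sub_isBigO (hF : IsNormalForm γ h κ η) (K : ℝ) :
    (fun q => exp (γ * log q.1⁻¹) *
      (curveDist γ h q - defect γ h q.1 - (q.2 - q.1 ^ 2 * h q.1))) =O[cusp K]
        fun q => ‖q.1‖ ^ (1 + η) * (1 + ‖(curveChart γ h κ q).2‖) := by
  have hh := hF.differentiable
  have hcont := hh.continuous
  have htriple : Tendsto (fun q : ℂ × ℂ => (q.1, q.2, q.1 ^ 2 * h q.1)) (𝓝 0) (𝓝 0) :=
    Continuous.tendsto' (by fun_prop) _ _ (by simp)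
  have hnorm : (fun q : ℂ × ℂ => ‖(q.1, q.2, q.1 ^ 2 * h q.1)‖) =O[cusp K] fun q => ‖q.1‖ := by
    have hdiff : Differentiable ℂ fun q : ℂ × ℂ => (q.1, q.2, q.1 ^ 2 * h q.1) := by fun_prop
    have hO := (hdiff 0).isBigO_sub.mono (cusp_le_nhds K)
    simp only [sub_zero] at hO
    simpa using (hO.norm_right.trans (norm_isBigO_fst_cusp K)).norm_norm
  have hv : (fun q : ℂ × ℂ => ‖q.1‖) =O[cusp K] fun q => ‖q.1‖ := isBigO_refl _ _
  have hsub := isBigO_refl (fun q : ℂ × ℂ => ‖q.2 - q.1 ^ 2 * h q.1‖) (cusp K)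
  have hdist := (((curveDist_sub_isBigO γ hh).comp_tendsto htriple).mono (cusp_le_nhds K)).trans
    (hv.mul (hnorm.mul hsub))
  have hexp := exp_mul_sub_isBigO_cusp γ h κ (s := η - 1) (by linarith [hF.le_half]) K
  refine (((isBigO_refl (fun q : ℂ × ℂ => exp (γ * log q.1⁻¹)) (cusp K)).norm_right.mul
    hdist).trans (IsBigO.congr' ((hv.mul hv).mul hexp.norm_left) ?_ ?_))
  · exact .of_forall fun q => by
      simp only [norm_mul]
      ring
  · filter_upwards [eventually_fst_ne_zero_cusp K] with q hq
    rw [show 1 + η = 1 + 1 + (η - 1) by ring, Real.rpow_add (norm_pos_iff.2 hq),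
      Real.rpow_add (norm_pos_iff.2 hq), Real.rpow_one]
    ring

lemma IsNormalForm.curveChart_planarMap_snd_sub_isBigO (hF : IsNormalForm γ h κ η) (K : ℝ) :
    (fun q => (curveChart γ h κ (planarMap γ q)).2 - (curveChart γ h κ q).2) =O[cusp K]
      fun q => ‖q.1‖ ^ (1 + η) * (1 + ‖(curveChart γ h κ q).2‖) := by
  have hdefect : (fun q => exp (γ * log q.1⁻¹) * defect γ h q.1 - κ * q.1) =O[cusp K]
      fun q => ‖q.1‖ ^ (1 + η) :=
    (hF.isBigO.comp_tendsto (tendsto_inv_fst_cusp K)).congr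
      (fun q => by simp only [Function.comp_apply, inv_inv]) fun q => norm_inv_rpow_neg q.1 _
  have hlog : (fun q => κ * (q.1 * (expDiff q - 1))) =O[cusp K] fun q => ‖q.1‖ ^ (1 + η) := by
    refine (((isBigO_refl Prod.fst _).mul (expDiff_sub_one_isBigO_cusp K)).const_mul_left κ).trans
      (IsBigO.trans (IsBigO.of_norm_le fun q => ?_)
        (rpow_norm_fst_isBigO_cusp (t := 2) (by linarith [hF.le_half]) K))
    rw [Real.rpow_two, norm_mul, sq]
  have hY : (fun q => ‖q.1‖ ^ (1 + η)) =O[cusp K]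
      fun q => ‖q.1‖ ^ (1 + η) * (1 + ‖(curveChart γ h κ q).2‖) :=
    IsBigO.of_norm_le fun q => by
      rw [Real.norm_of_nonneg (by positivity)]
      exact le_mul_of_one_le_right (by positivity) (le_add_of_nonneg_right (norm_nonneg _))
  refine (((hF.exp_mul_curveDist_sub_isBigO K).add (hdefect.trans hY)).sub
    (hlog.trans hY)).congr' ?_ EventuallyEq.rfl
  filter_upwards [eventually_planarMap_cusp γ K] with q hq
  exact (curveChart_planarMap_snd_sub hq.2).symm

lemma tendsto_re_fst_farRight (M : ℝ) :
    Tendsto (fun d : ℂ × ℂ => d.1.re) (farRight ℂ M) atTop :=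
  tendsto_comap.mono_left inf_le_left

lemma tendsto_fst_farRight (M : ℝ) :
    Tendsto (fun d : ℂ × ℂ => d.1) (farRight ℂ M) (Bornology.cobounded ℂ) :=
  tendsto_norm_atTop_iff_cobounded.1
    (tendsto_atTop_mono (fun _ => Complex.re_le_norm _) (tendsto_re_fst_farRight M))

lemma snd_isBigO_one_farRight (M : ℝ) :
    (fun d : ℂ × ℂ => d.2) =O[farRight ℂ M] fun _ => (1 : ℝ) :=
  IsBigO.of_bound M (Eventually.mono (mem_inf_of_right (mem_principal_self _))
    fun d (hd : ‖d.2‖ < M) => by simpa using hd.le)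

lemma IsNormalForm.curveChartInv_snd_isBigO (hF : IsNormalForm γ h κ η) (M : ℝ) :
    (fun d => (curveChartInv γ h κ d).2) =O[farRight ℂ M] fun d => ‖d.1‖ ^ (-(1 + η)) := by
  have hcob := tendsto_fst_farRight M
  have hcurve : (fun d : ℂ × ℂ => d.1⁻¹ ^ 2 * h d.1⁻¹) =O[farRight ℂ M]
      fun d => ‖d.1‖ ^ (-(1 + η)) := by
    have hcont : Tendsto h (𝓝 0) (𝓝 (h 0)) := hF.differentiable.continuous.tendsto 0
    have h1 := ((isBigO_refl (fun v : ℂ => v ^ 2) (𝓝 0)).mul (hcont.isBigO_one ℂ)).comp_tendsto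
      tendsto_inv₀_cobounded
    have h2 := rpow_norm_isBigO_cobounded (s := -2) (t := -(1 + η)) (by linarith [hF.le_half])
    refine ((IsBigO.trans (h1.norm_right.congr_right fun x => ?_) h2).comp_tendsto hcob)
    simp
  have hsum : (fun d : ℂ × ℂ => d.2 + κ * log d.1) =O[farRight ℂ M] fun d => ‖d.1‖ ^ η := by
    have hone := (rpow_norm_isBigO_cobounded hF.pos.le).comp_tendsto hcob
    simp only [Function.comp_def, Real.rpow_zero] at hone
    exact ((snd_isBigO_one_farRight M).trans hone).add
      (((log_isBigO_cobounded hF.pos).comp_tendsto hcob).const_mul_left κ)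
  have hexp : (fun d : ℂ × ℂ => exp (-(γ * log d.1))) =O[farRight ℂ M] fun d => ‖d.1‖ ^ (-γ) := by
    refine IsBigO.of_bound 1 ?_
    filter_upwards [hcob.eventually (Bornology.eventually_ne_cobounded 0)] with d hd
    have hnorm := norm_exp_mul_log (-γ) hd
    push_cast at hnorm
    rw [← neg_mul, hnorm, one_mul]
    exact le_abs_self _
  refine hcurve.add ((hexp.mul hsum).trans ?_)
  refine IsBigO.congr' (((rpow_norm_isBigO_cobounded (s := -γ + η) (t := -(1 + η))
    (by linarith [hF.le])).comp_tendsto hcob)) ?_ EventuallyEq.rfl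
  filter_upwards [hcob.eventually (Bornology.eventually_ne_cobounded 0)] with d hd
  rw [Function.comp_apply, Real.rpow_add (norm_pos_iff.2 hd)]

lemma IsNormalForm.tendsto_curveChartInv (hF : IsNormalForm γ h κ η) (M : ℝ) :
    Tendsto (curveChartInv γ h κ) (farRight ℂ M) (cusp 1) := by
  have hcob := tendsto_fst_farRight M
  refine tendsto_inf.2 ⟨tendsto_comap_iff.2 ?_, tendsto_principal.2 ?_⟩
  · simpa only [Function.comp_def, curveChartInv, inv_inv] using
      tendsto_re_fst_farRight M
  · have hsmall : Tendsto (fun d : ℂ × ℂ => ‖d.1‖ ^ (-η)) (farRight ℂ M) (𝓝 0) :=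
      (tendsto_rpow_neg_atTop hF.pos).comp (tendsto_norm_cobounded_atTop.comp hcob)
    have hlittle := (isBigO_refl (fun d : ℂ × ℂ => ‖d.1‖⁻¹) (farRight ℂ M)).mul_isLittleO
      ((isLittleO_one_iff ℝ).2 hsmall)
    refine (((hF.curveChartInv_snd_isBigO M).trans_isLittleO
      (hlittle.congr' ?_ EventuallyEq.rfl)).bound one_pos).mono fun d hd => ?_
    · filter_upwards [hcob.eventually (Bornology.eventually_ne_cobounded 0)] with d hd
      rw [neg_add, Real.rpow_add (norm_pos_iff.2 hd), Real.rpow_neg_one]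
    · simpa [curveChartInv] using hd

lemma norm_curveChartInv_fst_rpow (γ : ℝ) (h : ℂ → ℂ) (κ : ℂ) (d : ℂ × ℂ) (s : ℝ) :
    ‖(curveChartInv γ h κ d).1‖ ^ s = ‖d.1‖ ^ (-s) := by
  rw [← norm_inv_rpow_neg, curveChartInv, inv_inv]

lemma differentiable_planarMap (γ : ℂ) : Differentiable ℂ (planarMap γ) := by
  unfold planarMap expDiff
  fun_prop

lemma IsNormalForm.logShift_sub_isBigO (hF : IsNormalForm γ h κ η) (M : ℝ) :
    (fun d => logShift (1 / 2) ((curveChart γ h κ ∘ planarMap γ ∘ curveChartInv γ h κ) d) -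
      logShift (1 / 2) d - (1, 0)) =O[farRight ℂ M] fun d => ‖d.1‖ ^ (-(1 + η)) := by
  have hcusp := hF.tendsto_curveChartInv M
  refine IsBigO.prod_left ?_ ?_
  · have hsq : (fun d => ‖(curveChartInv γ h κ d).1‖ ^ 2) =O[farRight ℂ M]
        fun d => ‖d.1‖ ^ (-(1 + η)) := by
      have hO := (rpow_norm_fst_isBigO_cusp (s := 1 + η) (t := 2)
        (by linarith [hF.le_half]) 1).comp_tendsto hcusp
      simpa only [Function.comp_def, Real.rpow_two, norm_curveChartInv_fst_rpow] using hO
    refine (((inversionStep_add_isBigO_cusp 1).comp_tendsto hcusp).trans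
      (hsq.add (hF.curveChartInv_snd_isBigO M).norm_left)).congr' ?_ EventuallyEq.rfl
    filter_upwards [hcusp.eventually (eventually_planarMap_cusp γ 1),
      hcusp.eventually (eventually_fst_ne_zero_cusp 1)] with d hG hd
    have hinv : (curveChartInv γ h κ d).1⁻¹ = d.1 := inv_inv d.1
    simp only [Function.comp_apply, ← inv_planarMap_fst_sub γ hd, logShift, curveChart, hG.2,
      Prod.mk_sub_mk, hinv]
    ring
  · have hone : (fun d : ℂ × ℂ => 1 + ‖d.2‖) =O[farRight ℂ M] fun _ => (1 : ℝ) :=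
      (isBigO_refl _ _).add (snd_isBigO_one_farRight M).norm_left
    refine (((hF.curveChart_planarMap_snd_sub_isBigO 1).comp_tendsto hcusp).trans
      ((isBigO_refl _ _).mul (hone.congr_left fun d => ?_))).congr (fun d => ?_) fun d => ?_
    · rw [rightInverse_curveChartInv]
    · simp [logShift, rightInverse_curveChartInv γ h κ d]
    · rw [norm_curveChartInv_fst_rpow, mul_one]

lemma IsNormalForm.isTranslationPerturbation (hF : IsNormalForm γ h κ η) :
    IsTranslationPerturbation (curveChart γ h κ ∘ planarMap γ ∘ curveChartInv γ h κ) (1 / 2)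
      η where
  differentiableAt M := by
    filter_upwards [(tendsto_re_fst_farRight M).eventually_gt_atTop 0,
      (hF.tendsto_curveChartInv M).eventually (eventually_planarMap_cusp γ 1)] with d hd hG
    exact (differentiableAt_curveChart hF.differentiable hG.1).comp d
      ((differentiable_planarMap γ _).comp d (differentiableAt_curveChartInv hF.differentiable hd))
  tendsto_fst M := by
    have hcusp := hF.tendsto_curveChartInv M
    refine ((tendsto_inversionStep.mono_left (cusp_le_nhds 1)).comp hcusp).congr' ?_
    filter_upwards [hcusp.eventually (eventually_fst_ne_zero_cusp 1)] with d hd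
    rw [Function.comp_apply, ← inv_planarMap_fst_sub γ hd]
    simp [curveChart, curveChartInv]
  isBigO := hF.logShift_sub_isBigO

end CurveChart

section Growth

lemma isBigO_one_of_le_one_add_mul_add {u b c : ℕ → ℝ} (hu : ∀ n, 0 ≤ u n) (hb : ∀ n, 0 ≤ b n)
    (hc : ∀ n, 0 ≤ c n) (hbsum : Summable b) (hcsum : Summable c)
    (h : ∀ᶠ n in atTop, u (n + 1) ≤ (1 + c n) * u n + b n) :
    u =O[atTop] fun _ => (1 : ℝ) := by
  obtain ⟨n₀, hn₀⟩ := eventually_atTop.1 h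
  refine IsBigO.of_bound ((u n₀ + ∑' n, b n) * Real.exp (∑' n, c n)) ?_
  filter_upwards [eventually_ge_atTop n₀] with n hn
  have hle := discrete_gronwall (hu n₀) hn₀ (fun n _ => hc n) (fun n _ => hb n) hn
  rw [Real.norm_of_nonneg (hu n), norm_one, mul_one]
  refine hle.trans ?_
  have hu₀ := hu n₀
  have hbtsum : 0 ≤ ∑' n, b n := tsum_nonneg hb
  gcongr
  · exact hbsum.sum_le_tsum _ fun n _ => hb n
  · exact hcsum.sum_le_tsum _ fun n _ => hc n

lemma tendsto_inv_natCast_smul {E : Type*} [NormedAddCommGroup E] [NormedSpace ℝ E] {x : ℕ → E}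
    {l : E} (h : Tendsto (fun n => x (n + 1) - x n) atTop (𝓝 l)) :
    Tendsto (fun n : ℕ => (n : ℝ)⁻¹ • x n) atTop (𝓝 l) := by
  have hsum := h.cesaro_smul
  simp only [Finset.sum_range_sub] at hsum
  have hzero : Tendsto (fun n : ℕ => (n : ℝ)⁻¹ • x 0) atTop (𝓝 0) := by
    simpa using (tendsto_inv_atTop_nhds_zero_nat (𝕜 := ℝ)).smul_const (x 0)
  simpa [smul_sub] using hsum.add hzero

end Growth

section PlanarBasin

/-- The part outside the line `v = 0` of the basin of attraction of the origin under the planar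
map. -/
def planarBasin (γ : ℂ) : Set (ℂ × ℂ) :=
  {q | q.1 ≠ 0 ∧ Tendsto (fun n => (planarMap γ)^[n] q) atTop (𝓝 0)}

lemma planarMap_mem_planarBasin_iff {γ : ℂ} {q : ℂ × ℂ} :
    planarMap γ q ∈ planarBasin γ ↔ q ∈ planarBasin γ := by
  refine and_congr planarMap_fst_ne_zero ?_
  exact tendsto_add_atTop_iff_nat (f := fun n => (planarMap γ)^[n] q) 1

lemma iterate_planarMap_fst_ne_zero {γ : ℂ} {q : ℂ × ℂ} (hq : q.1 ≠ 0) (n : ℕ) :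
    ((planarMap γ)^[n] q).1 ≠ 0 := by
  induction n with
  | zero => exact hq
  | succ n ih =>
    rw [Function.iterate_succ_apply']
    exact planarMap_fst_ne_zero.2 ih

lemma tendsto_inv_natCast_smul_inv_iterate_fst {γ : ℂ} {q : ℂ × ℂ} (hq : q ∈ planarBasin γ) :
    Tendsto (fun n : ℕ => (n : ℝ)⁻¹ • ((planarMap γ)^[n] q).1⁻¹) atTop (𝓝 1) := by
  refine tendsto_inv_natCast_smul ((tendsto_inversionStep.comp hq.2).congr fun n => ?_)
  rw [Function.comp_apply, ← inv_planarMap_fst_sub γ (iterate_planarMap_fst_ne_zero hq.1 n),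
    Function.iterate_succ_apply']

lemma tendsto_natCast_mul_iterate_fst {γ : ℂ} {q : ℂ × ℂ} (hq : q ∈ planarBasin γ) :
    Tendsto (fun n : ℕ => (n : ℂ) * ((planarMap γ)^[n] q).1) atTop (𝓝 1) := by
  simpa [mul_comm] using (tendsto_inv_natCast_smul_inv_iterate_fst hq).inv₀ one_ne_zero

lemma iterate_fst_isBigO_inv {γ : ℂ} {q : ℂ × ℂ} (hq : q ∈ planarBasin γ) :
    (fun n => ((planarMap γ)^[n] q).1) =O[atTop] fun n : ℕ => (n : ℝ)⁻¹ := by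
  have hone := (tendsto_natCast_mul_iterate_fst hq).isBigO_one ℝ
  have hinv := isBigO_refl (fun n : ℕ => (n : ℝ)⁻¹) atTop
  refine IsBigO.congr' ((Complex.isBigO_ofReal_left.2 hinv).mul hone) ?_ ?_
  · filter_upwards [eventually_ne_atTop 0] with n hn
    rw [Complex.ofReal_inv, Complex.ofReal_natCast, inv_mul_cancel_left₀ (Nat.cast_ne_zero.2 hn)]
  · exact .of_forall fun n => mul_one _

lemma tendsto_re_inv_iterate_fst {γ : ℂ} {q : ℂ × ℂ} (hq : q ∈ planarBasin γ) :
    Tendsto (fun n => ((planarMap γ)^[n] q).1⁻¹.re) atTop atTop := by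
  have hre := (Complex.continuous_re.tendsto 1).comp (tendsto_inv_natCast_smul_inv_iterate_fst hq)
  refine (hre.pos_mul_atTop one_pos (tendsto_natCast_atTop_atTop (R := ℝ))).congr' ?_
  filter_upwards [eventually_ne_atTop 0] with n hn
  rw [Function.comp_apply, Complex.smul_re, smul_eq_mul, mul_comm,
    mul_inv_cancel_left₀ (Nat.cast_ne_zero.2 hn)]

lemma eventually_norm_iterate_fst_le {γ : ℂ} {q : ℂ × ℂ} (hq : q ∈ planarBasin γ) :
    ∀ᶠ n in atTop, ‖((planarMap γ)^[n] q).1‖ ≤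
      2 * (((planarMap γ)^[n] q).1 * expDiff ((planarMap γ)^[n] q)).re := by
  have hfst := tendsto_natCast_mul_iterate_fst hq
  have hre := (Complex.continuous_re.tendsto _).comp (hfst.mul (tendsto_expDiff.comp hq.2))
  filter_upwards [hfst.norm.eventually_lt (hre.const_mul 2) (by norm_num), eventually_gt_atTop 0]
    with n hn hpos
  refine le_of_mul_le_mul_left ?_ (Nat.cast_pos.2 hpos : (0 : ℝ) < n)
  rw [norm_mul, Complex.norm_natCast, Function.comp_apply, Function.comp_apply, mul_assoc,
    ← Complex.ofReal_natCast, Complex.re_ofReal_mul] at hn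
  linarith

end PlanarBasin

section Entry

lemma inv_fst_mul_snd_planarMap (γ : ℂ) (q : ℂ × ℂ) :
    (planarMap γ q).1⁻¹ * (planarMap γ q).2 =
      exp (-((γ - 1) * (q.1 * expDiff q))) * (q.1⁻¹ * curveDist γ 0 q) := by
  rw [inv_planarMap_fst, show -((γ - 1) * (q.1 * expDiff q)) =
    q.1 * expDiff q + -(γ * (q.1 * expDiff q)) by ring, Complex.exp_add]
  simp only [Complex.exp_neg, curveDist, Pi.zero_apply, mul_zero, sub_zero]
  field_simp

lemma exists_norm_inv_fst_mul_curveDist_zero_le (γ : ℂ) {δ : ℝ} (hδ : 0 < δ) :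
    ∃ C, 0 ≤ C ∧ ∀ᶠ q in 𝓝 (0 : ℂ × ℂ), q.1 ≠ 0 →
      ‖q.1⁻¹ * curveDist γ 0 q‖ ≤ ‖q.1⁻¹ * q.2‖ * (1 + δ * ‖q.1‖) + C * ‖q.1‖ ^ 2 := by
  obtain ⟨C, hC, hO⟩ := (curveDist_zero_sub_isBigO γ).exists_pos
  refine ⟨C, hC.le, ?_⟩
  filter_upwards [hO.bound, Metric.closedBall_mem_nhds 0 (div_pos hδ hC)] with q hdist hball hq
  have hsnd : C * ‖q.2‖ ≤ δ := by
    rw [mem_closedBall_zero_iff, le_div_iff₀ hC] at hball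
    nlinarith [norm_snd_le q]
  have hnorm : ‖q‖ ^ 2 ≤ ‖q.1‖ ^ 2 + ‖q.2‖ ^ 2 := by
    rcases max_choice ‖q.1‖ ‖q.2‖ with h | h <;> rw [Prod.norm_def, h] <;>
      nlinarith [sq_nonneg ‖q.1‖, sq_nonneg ‖q.2‖]
  have hfst : 0 < ‖q.1‖ := norm_pos_iff.2 hq
  have hω : ‖q.2‖ = ‖q.1‖ * ‖q.1⁻¹ * q.2‖ := by rw [← norm_mul, mul_inv_cancel_left₀ hq]
  calc ‖q.1⁻¹ * curveDist γ 0 q‖ = ‖q.1⁻¹ * q.2 + q.1⁻¹ * (curveDist γ 0 q - q.2)‖ := by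
        ring_nf
    _ ≤ ‖q.1⁻¹ * q.2‖ + ‖q.1‖⁻¹ * (C * (‖q.1‖ * ‖q‖ ^ 2)) := by
        refine (norm_add_le _ _).trans ?_
        rw [Real.norm_of_nonneg (by positivity)] at hdist
        rw [norm_mul q.1⁻¹ (_ - _), norm_inv]
        gcongr
    _ = ‖q.1⁻¹ * q.2‖ + C * ‖q‖ ^ 2 := by
        field_simp
    _ ≤ ‖q.1⁻¹ * q.2‖ + (C * ‖q.1‖ ^ 2 + C * ‖q.2‖ * ‖q.2‖) := by
        gcongr
        linarith [mul_le_mul_of_nonneg_left hnorm hC.le]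
    _ ≤ ‖q.1⁻¹ * q.2‖ + (C * ‖q.1‖ ^ 2 + δ * (‖q.1‖ * ‖q.1⁻¹ * q.2‖)) := by
        rw [← hω]
        gcongr
    _ = ‖q.1⁻¹ * q.2‖ * (1 + δ * ‖q.1‖) + C * ‖q.1‖ ^ 2 := by ring

/-- Along the direction of positive `v`, the factor `exp (-(γ - 1) v)` absorbs the contribution of
`ω` to the error. -/
lemma exists_norm_inv_fst_mul_snd_planarMap_le {γ : ℝ} (hγ : 1 < γ) :
    ∃ C, 0 ≤ C ∧ ∀ᶠ q in 𝓝 (0 : ℂ × ℂ), q.1 ≠ 0 → ‖q.1‖ ≤ 2 * (q.1 * expDiff q).re →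
      ‖(planarMap γ q).1⁻¹ * (planarMap γ q).2‖ ≤ ‖q.1⁻¹ * q.2‖ + C * ‖q.1‖ ^ 2 := by
  obtain ⟨δ, hγδ⟩ : ∃ δ, γ - 1 = 2 * δ := ⟨(γ - 1) / 2, by ring⟩
  have hδ : 0 < δ := by linarith
  obtain ⟨C, hC, hcurve⟩ := exists_norm_inv_fst_mul_curveDist_zero_le γ hδ
  refine ⟨C, hC, ?_⟩
  filter_upwards [hcurve] with q hdist hq hre
  have hexp : ‖exp (-((γ - 1) * (q.1 * expDiff q)))‖ ≤ Real.exp (-(δ * ‖q.1‖)) := by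
    rw [Complex.norm_exp, Complex.neg_re, ← Complex.ofReal_one, ← Complex.ofReal_sub,
      Complex.re_ofReal_mul, Real.exp_le_exp, hγδ]
    nlinarith
  have hgain : Real.exp (-(δ * ‖q.1‖)) * (1 + δ * ‖q.1‖) ≤ 1 := by
    have hle := Real.add_one_le_exp (δ * ‖q.1‖)
    rwa [Real.exp_neg, inv_mul_le_one₀ (Real.exp_pos _), add_comm]
  have hexp_le : Real.exp (-(δ * ‖q.1‖)) ≤ 1 := Real.exp_le_one_iff.2 (by
    rw [neg_nonpos]
    positivity)
  rw [inv_fst_mul_snd_planarMap, norm_mul]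
  have hdist := hdist hq
  calc _ ≤ Real.exp (-(δ * ‖q.1‖)) * (‖q.1⁻¹ * q.2‖ * (1 + δ * ‖q.1‖) + C * ‖q.1‖ ^ 2) := by
        gcongr
    _ = ‖q.1⁻¹ * q.2‖ * (Real.exp (-(δ * ‖q.1‖)) * (1 + δ * ‖q.1‖)) +
        Real.exp (-(δ * ‖q.1‖)) * (C * ‖q.1‖ ^ 2) := by ring
    _ ≤ ‖q.1⁻¹ * q.2‖ * 1 + 1 * (C * ‖q.1‖ ^ 2) := by gcongr
    _ = ‖q.1⁻¹ * q.2‖ + C * ‖q.1‖ ^ 2 := by ring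

variable {γ : ℝ} {q : ℂ × ℂ}

lemma iterate_snd_isBigO_fst (hγ : 1 < γ) (hq : q ∈ planarBasin γ) :
    (fun n => ((planarMap γ)^[n] q).2) =O[atTop] fun n => ((planarMap γ)^[n] q).1 := by
  obtain ⟨C, hC, hstep⟩ := exists_norm_inv_fst_mul_snd_planarMap_le hγ
  have hsum : Summable fun n => C * ‖((planarMap γ)^[n] q).1‖ ^ 2 := by
    refine Summable.mul_left C (summable_of_isBigO_nat
      (Real.summable_one_div_nat_pow.2 one_lt_two) ?_)
    simpa using (iterate_fst_isBigO_inv hq).norm_left.pow 2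
  have hbound := isBigO_one_of_le_one_add_mul_add (c := 0)
    (u := fun n => ‖((planarMap γ)^[n] q).1⁻¹ * ((planarMap γ)^[n] q).2‖)
    (fun _ => norm_nonneg _) (fun _ => by positivity) (fun _ => le_rfl) hsum summable_zero (by
      filter_upwards [hq.2.eventually hstep, eventually_norm_iterate_fst_le hq] with n hn hfst
      simpa [Function.iterate_succ_apply'] using hn (iterate_planarMap_fst_ne_zero hq.1 n) hfst)
  refine (((isBigO_refl (fun n => ((planarMap γ)^[n] q).1) atTop).norm_right.mul
    hbound.of_norm_left).congr (fun n => ?_) fun _ => ?_).of_norm_right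
  · rw [mul_inv_cancel_left₀ (iterate_planarMap_fst_ne_zero hq.1 n)]
  · simp

lemma exists_tendsto_iterate_cusp (hγ : 1 < γ) (hq : q ∈ planarBasin γ) :
    ∃ K, Tendsto (fun n => (planarMap γ)^[n] q) atTop (cusp K) := by
  obtain ⟨K, hK⟩ := (iterate_snd_isBigO_fst hγ hq).bound
  exact ⟨K, tendsto_inf.2 ⟨tendsto_comap_iff.2 (tendsto_re_inv_iterate_fst hq),
    tendsto_principal.2 hK⟩⟩

lemma IsNormalForm.one_lt {γ : ℝ} {h : ℂ → ℂ} {κ : ℂ} {η : ℝ} (hF : IsNormalForm γ h κ η) :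
    1 < γ := by
  linarith [hF.le, hF.pos]

lemma IsNormalForm.curveChart_iterate_snd_isBigO_one {h : ℂ → ℂ} {κ : ℂ} {η : ℝ}
    (hF : IsNormalForm γ h κ η) (hq : q ∈ planarBasin γ) :
    (fun n => (curveChart γ h κ ((planarMap γ)^[n] q)).2) =O[atTop] fun _ => (1 : ℝ) := by
  obtain ⟨K, hK⟩ := exists_tendsto_iterate_cusp hF.one_lt hq
  obtain ⟨C, hC, hO⟩ :=
    ((hF.curveChart_planarMap_snd_sub_isBigO K).comp_tendsto hK).exists_nonneg
  have hsum : Summable fun n => C * ‖((planarMap γ)^[n] q).1‖ ^ (1 + η) := by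
    have hexp : -(1 + η) < -1 := by linarith [hF.pos]
    refine Summable.mul_left C (summable_of_isBigO_nat (Real.summable_nat_rpow.2 hexp) ?_)
    refine ((iterate_fst_isBigO_inv hq).norm_left.rpow (r := 1 + η) (by linarith [hF.pos])
      (.of_forall fun n => by positivity)).congr_right fun n => ?_
    rw [Real.inv_rpow n.cast_nonneg, Real.rpow_neg n.cast_nonneg]
  refine (isBigO_one_of_le_one_add_mul_add (fun n => norm_nonneg _) (fun n => by positivity)
    (fun n => by positivity) hsum hsum ?_).of_norm_left
  filter_upwards [hO.bound] with n hn
  rw [Function.iterate_succ_apply']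
  rw [Function.comp_apply, Function.comp_apply, Real.norm_of_nonneg (by positivity)] at hn
  linarith [norm_le_norm_add_norm_sub' (curveChart γ h κ (planarMap γ ((planarMap γ)^[n] q))).2
    (curveChart γ h κ ((planarMap γ)^[n] q)).2]

lemma IsNormalForm.exists_tendsto_curveChart_iterate {h : ℂ → ℂ} {κ : ℂ} {η : ℝ}
    (hF : IsNormalForm γ h κ η) (hq : q ∈ planarBasin γ) :
    ∃ M, Tendsto (fun n => curveChart γ h κ ((planarMap γ)^[n] q)) atTop (farRight ℂ M) := by
  obtain ⟨M, hM⟩ := (hF.curveChart_iterate_snd_isBigO_one hq).bound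
  refine ⟨M + 1, tendsto_inf.2 ⟨tendsto_comap_iff.2 (tendsto_re_inv_iterate_fst hq),
    tendsto_principal.2 (hM.mono fun n hn => ?_)⟩⟩
  rw [norm_one, mul_one] at hn
  exact hn.trans_lt (lt_add_one M)

end Entry

section Planar

lemma IsNormalForm.eventually_curveChartInv_mem_planarBasin {γ : ℝ} {h : ℂ → ℂ} {κ : ℂ} {η : ℝ}
    (hF : IsNormalForm γ h κ η) (M : ℝ) :
    ∀ᶠ d in farRight ℂ M, curveChartInv γ h κ d ∈ planarBasin γ := by
  have hsemi : Function.Semiconj (curveChartInv γ h κ)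
      (curveChart γ h κ ∘ planarMap γ ∘ curveChartInv γ h κ) (planarMap γ) := fun d =>
    leftInverse_curveChartInv γ h κ _
  filter_upwards [hF.isTranslationPerturbation.eventually_tendsto_iterate hF.pos M,
    (hF.tendsto_curveChartInv M).eventually (eventually_fst_ne_zero_cusp 1)] with d hd hfst
  refine ⟨hfst, ((hF.tendsto_curveChartInv _).comp hd).mono_right (cusp_le_nhds 1) |>.congr
    fun n => hsemi.iterate_right n d⟩

theorem exists_isBiholomorphicOn_planarBasin {γ : ℝ} (hγ : 1 < γ) :
    ∃ Φ Ψ : ℂ × ℂ → ℂ × ℂ, IsBiholomorphicOn Φ Ψ (planarBasin γ) univ := by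
  obtain ⟨h, κ, η, hF⟩ := exists_isNormalForm hγ
  obtain ⟨Ginv, hG⟩ := exists_isBiholomorphicOn_planarMap γ
  refine ⟨_, hF.isTranslationPerturbation.exists_isBiholomorphicOn_univ hG
    (leftInverse_curveChartInv γ h κ) (rightInverse_curveChartInv γ h κ) hF.pos
    (fun M => ?_) (fun q => planarMap_mem_planarBasin_iff)
    hF.eventually_curveChartInv_mem_planarBasin fun q hq => hF.exists_tendsto_curveChart_iterate hq⟩
  filter_upwards [(tendsto_re_fst_farRight M).eventually_gt_atTop 0] with d hd
  exact ⟨differentiableAt_curveChartInv hF.differentiable hd,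
    differentiableAt_curveChart hF.differentiable (by simpa [curveChartInv] using hd)⟩

end Planar

section TangentToId

variable {E : Type*} [NormedAddCommGroup E] [NormedSpace ℂ E] {f g : E → E}

/-- `f` fixes the origin and its derivative there is the identity. -/
structure IsTangentToId (f : E → E) : Prop where
  map_zero : f 0 = 0
  hasFDerivAt : HasFDerivAt f (ContinuousLinearMap.id ℂ E) 0

lemma IsTangentToId.comp (hg : IsTangentToId g) (hf : IsTangentToId f) : IsTangentToId (g ∘ f) where
  map_zero := by rw [Function.comp_apply, hf.map_zero, hg.map_zero]
  hasFDerivAt := HasFDerivAt.comp 0 (hf.map_zero.symm ▸ hg.hasFDerivAt) hf.hasFDerivAt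

end TangentToId

section Automorphism

/-- The inverse of `φ₃`. -/
noncomputable def φ₃inv (a b c : ℂ) (p : ℂ × ℂ × ℂ) : ℂ × ℂ × ℂ :=
  (p.1, p.2.1, (p.2.2 - (a + b) * p.1 ^ 2 * p.2.1 ^ 2) * exp ((a + b + c) * p.1 * p.2.1))

lemma isBiholomorphicOn_φ₁ : IsBiholomorphicOn φ₁ φ₁inv univ univ where
  differentiableOn := by unfold φ₁; fun_prop
  differentiableOn_inv := by unfold φ₁inv; fun_prop
  mapsTo := mapsTo_univ _ _
  mapsTo_inv := mapsTo_univ _ _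
  invOn := ⟨fun p _ => by simp [φ₁, φ₁inv], fun p _ => by simp [φ₁, φ₁inv]⟩

lemma isBiholomorphicOn_φ₂ (a b : ℂ) : IsBiholomorphicOn (φ₂ a b) (φ₂inv a b) univ univ where
  differentiableOn := by unfold φ₂; fun_prop
  differentiableOn_inv := by unfold φ₂inv; fun_prop
  mapsTo := mapsTo_univ _ _
  mapsTo_inv := mapsTo_univ _ _
  invOn := ⟨fun p _ => by simp [φ₂, φ₂inv, mul_assoc, ← Complex.exp_add],
    fun p _ => by simp [φ₂, φ₂inv, mul_assoc, ← Complex.exp_add]⟩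

lemma isBiholomorphicOn_φ₃ (a b c : ℂ) :
    IsBiholomorphicOn (φ₃ a b c) (φ₃inv a b c) univ univ where
  differentiableOn := by unfold φ₃; fun_prop
  differentiableOn_inv := by unfold φ₃inv; fun_prop
  mapsTo := mapsTo_univ _ _
  mapsTo_inv := mapsTo_univ _ _
  invOn := ⟨fun p _ => by simp [φ₃, φ₃inv, mul_assoc, ← Complex.exp_add],
    fun p _ => by simp [φ₃, φ₃inv, mul_assoc, ← Complex.exp_add]⟩

lemma exists_isBiholomorphicOn_Fmap (a b c : ℂ) :
    ∃ Finv, IsBiholomorphicOn (Fmap a b c) Finv univ univ :=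
  ⟨_, (((isBiholomorphicOn_φ₁.trans (isBiholomorphicOn_φ₂ a b)).trans
    isBiholomorphicOn_φ₁.symm).trans (isBiholomorphicOn_φ₂ a b).symm).trans
      (isBiholomorphicOn_φ₃ a b c)⟩

lemma hasFDerivAt_coordinates (p : ℂ × ℂ × ℂ) :
    HasFDerivAt (fun p : ℂ × ℂ × ℂ => p.1) (.fst ℂ ℂ (ℂ × ℂ)) p ∧
    HasFDerivAt (fun p : ℂ × ℂ × ℂ => p.2.1) (.comp (.fst ℂ ℂ ℂ) (.snd ℂ ℂ (ℂ × ℂ))) p ∧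
    HasFDerivAt (fun p : ℂ × ℂ × ℂ => p.2.2) (.comp (.snd ℂ ℂ ℂ) (.snd ℂ ℂ (ℂ × ℂ))) p :=
  ⟨hasFDerivAt_fst, hasFDerivAt_snd.fst, hasFDerivAt_snd.snd⟩

lemma isTangentToId_φ₁ : IsTangentToId φ₁ where
  map_zero := by simp [φ₁]
  hasFDerivAt := by
    obtain ⟨hz, ht, hw⟩ := hasFDerivAt_coordinates 0
    exact (hz.prodMk (ht.prodMk (hw.sub (hz.mul ht)))).congr_fderiv (by ext <;> simp)

lemma isTangentToId_φ₁inv : IsTangentToId φ₁inv where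
  map_zero := by simp [φ₁inv]
  hasFDerivAt := by
    obtain ⟨hz, ht, hw⟩ := hasFDerivAt_coordinates 0
    exact (hz.prodMk (ht.prodMk (hw.add (hz.mul ht)))).congr_fderiv (by ext <;> simp)

lemma isTangentToId_φ₂ (a b : ℂ) : IsTangentToId (φ₂ a b) where
  map_zero := by simp [φ₂]
  hasFDerivAt := by
    obtain ⟨hz, ht, hw⟩ := hasFDerivAt_coordinates 0
    exact ((hz.mul (hw.const_mul a).cexp).prodMk ((ht.mul (hw.const_mul b).cexp).prodMk
      hw)).congr_fderiv (by ext <;> simp)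

lemma φ₂inv_eq_φ₂_neg (a b : ℂ) : φ₂inv a b = φ₂ (-a) (-b) := by
  funext p
  simp only [φ₂inv, φ₂, neg_mul]

lemma isTangentToId_φ₃ (a b c : ℂ) : IsTangentToId (φ₃ a b c) where
  map_zero := by simp [φ₃]
  hasFDerivAt := by
    obtain ⟨hz, ht, hw⟩ := hasFDerivAt_coordinates 0
    exact (hz.prodMk (ht.prodMk ((hw.mul ((hz.const_mul (a + b + c)).mul ht).neg.cexp).add
      (((hz.pow 2).const_mul (a + b)).mul (ht.pow 2))))).congr_fderiv (by ext <;> simp)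

lemma isTangentToId_Fmap (a b c : ℂ) : IsTangentToId (Fmap a b c) :=
  (isTangentToId_φ₃ a b c).comp <| (φ₂inv_eq_φ₂_neg a b ▸ isTangentToId_φ₂ (-a) (-b)).comp <|
    isTangentToId_φ₁inv.comp <| (isTangentToId_φ₂ a b).comp isTangentToId_φ₁

end Automorphism

section Semiconjugacy

variable {a c : ℂ}

/-- The projection `π(z, t, w) = (zt, w)` rescaled by `2a`; for `a = b` it semiconjugates `F` to a
planar map. -/
noncomputable def toPlanar (a : ℂ) (p : ℂ × ℂ × ℂ) : ℂ × ℂ := (2 * a) • πmap p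

lemma continuous_toPlanar (a : ℂ) : Continuous (toPlanar a) := by
  unfold toPlanar πmap
  fun_prop

/-- The common factor by which `F` multiplies `z` and `t` when `a = b`. -/
noncomputable def stretch (a : ℂ) (p : ℂ × ℂ × ℂ) : ℂ :=
  exp (-((toPlanar a p).1 * expDiff (toPlanar a p) / 2))

lemma Fmap_apply (a c : ℂ) (p : ℂ × ℂ × ℂ) :
    Fmap a a c p = φ₃ a a c (p.1 * stretch a p, p.2.1 * stretch a p,
      p.2.2 - p.1 * p.2.1 + p.1 * p.2.1 * expDiff (toPlanar a p)) := by
  have hE : exp (a * (p.2.2 - p.1 * p.2.1)) * exp (a * (p.2.2 - p.1 * p.2.1)) =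
      expDiff (toPlanar a p) := by
    simp only [← Complex.exp_add, expDiff, toPlanar, πmap, Prod.smul_mk, smul_eq_mul]
    ring_nf
  have hzt : p.1 * exp (a * (p.2.2 - p.1 * p.2.1)) *
      (p.2.1 * exp (a * (p.2.2 - p.1 * p.2.1))) = p.1 * p.2.1 * expDiff (toPlanar a p) := by
    rw [← hE]
    ring
  have hstretch : exp (a * (p.2.2 - p.1 * p.2.1)) *
      exp (-(a * (p.2.2 - p.1 * p.2.1 + p.1 * p.2.1 * expDiff (toPlanar a p)))) =
      stretch a p := by
    rw [← Complex.exp_add, stretch]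
    congr 1
    simp only [toPlanar, πmap, Prod.smul_mk, smul_eq_mul]
    ring
  simp only [Fmap, Function.comp_apply, φ₁, φ₂, φ₁inv, φ₂inv, hzt, mul_assoc _ (exp _) (exp _),
    hstretch]

lemma stretch_sq (a : ℂ) (p : ℂ × ℂ × ℂ) :
    stretch a p ^ 2 = exp (-((toPlanar a p).1 * expDiff (toPlanar a p))) := by
  rw [stretch, ← Complex.exp_nat_mul]
  congr 1
  push_cast
  ring

lemma semiconj_toPlanar {γ : ℂ} (hc : c = 2 * a * γ) :
    Function.Semiconj (toPlanar a) (Fmap a a c) (planarMap γ) := fun p => by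
  have hzt : (toPlanar a p).1 * exp (-((toPlanar a p).1 * expDiff (toPlanar a p))) =
      2 * a * (p.1 * stretch a p * (p.2.1 * stretch a p)) := by
    rw [← stretch_sq]
    simp only [toPlanar, πmap, Prod.smul_mk, smul_eq_mul]
    ring
  have hexp : (a + a + c) * (p.1 * stretch a p) * (p.2.1 * stretch a p) =
      (1 + γ) * (2 * a * (p.1 * stretch a p * (p.2.1 * stretch a p))) := by
    rw [hc]
    ring
  rw [Fmap_apply, planarMap, hzt]
  simp only [toPlanar, πmap, φ₃, hexp, Prod.smul_mk, smul_eq_mul, Prod.mk.injEq, true_and]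
  ring

lemma Fmap_eq_self {p : ℂ × ℂ × ℂ} (hp : p.1 * p.2.1 = 0) : Fmap a a c p = p := by
  have hstretch : stretch a p = 1 := by simp [stretch, toPlanar, πmap, hp]
  rw [Fmap_apply, hstretch, hp]
  simp [φ₃, mul_assoc, ← mul_pow, hp]

lemma Fmap_fst_mul_snd_eq (a c : ℂ) (p : ℂ × ℂ × ℂ) (n : ℕ) :
    ((Fmap a a c)^[n] p).1 * p.2.1 = p.1 * ((Fmap a a c)^[n] p).2.1 := by
  induction n with
  | zero => rfl
  | succ n ih =>
    rw [Function.iterate_succ_apply', Fmap_apply]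
    simp only [φ₃]
    linear_combination stretch a ((Fmap a a c)^[n] p) * ih

lemma tendsto_zero_of_tendsto_πmap {ι : Type*} {l : Filter ι} {u : ι → ℂ × ℂ × ℂ} {z t : ℂ}
    (hz : z ≠ 0) (ht : t ≠ 0) (hratio : ∀ i, (u i).1 * t = z * (u i).2.1)
    (hu : Tendsto (fun i => πmap (u i)) l (𝓝 0)) : Tendsto u l (𝓝 0) := by
  have hfst : Tendsto (fun i => (u i).1) l (𝓝 0) := by
    have hsq : Tendsto (fun i => (u i).1 ^ 2) l (𝓝 (z / t * 0)) :=
      (((continuous_fst.tendsto' _ _ rfl).comp hu).const_mul (z / t)).congr fun i => by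
        simp only [Function.comp_apply, πmap]
        field_simp
        linear_combination -(u i).1 * hratio i
    rw [mul_zero] at hsq
    refine (isLittleO_one_iff ℝ).1 (IsLittleO.of_pow (n := 2) ?_ two_ne_zero)
    simpa [Pi.pow_def] using (isLittleO_one_iff ℝ).2 hsq
  have hsnd : Tendsto (fun i => (u i).2.1) l (𝓝 0) := by
    simpa using (hfst.const_mul (t / z)).congr fun i => by
      field_simp
      linear_combination hratio i
  exact hfst.prodMk_nhds (hsnd.prodMk_nhds ((continuous_snd.tendsto' _ _ rfl).comp hu))

lemma toPlanar_mem_planarBasin {γ : ℂ} (ha : a ≠ 0) (hc : c = 2 * a * γ) {p : ℂ × ℂ × ℂ}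
    (hp : p ∈ basinF a a c) : toPlanar a p ∈ planarBasin γ := by
  refine ⟨fun hfst => hp.1 ?_, ?_⟩
  · have hzt : p.1 * p.2.1 = 0 := by simpa [toPlanar, πmap, ha] using hfst
    exact tendsto_nhds_unique tendsto_const_nhds
      (hp.2.congr fun n => Function.iterate_fixed (Fmap_eq_self hzt) n)
  · exact (((continuous_toPlanar a).tendsto' 0 0 (by simp [toPlanar, πmap])).comp hp.2).congr
      fun n => (semiconj_toPlanar hc).iterate_right n p

lemma mem_basinF_of_toPlanar_mem {γ : ℂ} (ha : a ≠ 0) (hc : c = 2 * a * γ) {p : ℂ × ℂ × ℂ}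
    (hp : toPlanar a p ∈ planarBasin γ) : p ∈ basinF a a c := by
  have hz : p.1 ≠ 0 := fun h => hp.1 (by simp [toPlanar, πmap, h])
  have ht : p.2.1 ≠ 0 := fun h => hp.1 (by simp [toPlanar, πmap, h])
  refine ⟨fun h => hz (by rw [h]; rfl),
    tendsto_zero_of_tendsto_πmap hz ht (Fmap_fst_mul_snd_eq a c p) ?_⟩
  have hπ : ∀ n, (2 * a)⁻¹ • (planarMap γ)^[n] (toPlanar a p) = πmap ((Fmap a a c)^[n] p) :=
    fun n => by
      rw [← (semiconj_toPlanar hc).iterate_right n p, toPlanar, inv_smul_smul₀ (by simpa)]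
  simpa only [hπ, smul_zero] using hp.2.const_smul (2 * a)⁻¹

lemma isBiholomorphicOn_prodMk_toPlanar {γ : ℂ} (ha : a ≠ 0) (hc : c = 2 * a * γ) :
    IsBiholomorphicOn (fun p => (p.1, toPlanar a p))
      (fun q => (q.1, q.2.1 / (2 * a * q.1), q.2.2 / (2 * a))) (basinF a a c)
      ({0}ᶜ ×ˢ planarBasin γ) := by
  have hfst : ∀ p ∈ basinF a a c, p.1 ≠ 0 := fun p hp hz =>
    (toPlanar_mem_planarBasin ha hc hp).1 (by simp [toPlanar, πmap, hz])
  have hright : ∀ q : ℂ × ℂ × ℂ, q.1 ≠ 0 →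
      toPlanar a (q.1, q.2.1 / (2 * a * q.1), q.2.2 / (2 * a)) = q.2 := fun q hq => by
    ext <;> simp only [toPlanar, πmap, Prod.smul_mk, smul_eq_mul] <;> field_simp
  refine ⟨?_, fun q hq => ?_, fun p hp => ⟨hfst p hp, toPlanar_mem_planarBasin ha hc hp⟩,
    fun q hq => mem_basinF_of_toPlanar_mem ha hc ((hright q hq.1).symm ▸ hq.2),
    fun p hp => ?_, fun q hq => Prod.ext rfl (hright q hq.1)⟩
  · unfold toPlanar πmap
    fun_prop
  · have hden : 2 * a * q.1 ≠ 0 := mul_ne_zero (mul_ne_zero two_ne_zero ha) hq.1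
    have hdiv : DifferentiableAt ℂ (fun q : ℂ × ℂ × ℂ => q.2.1 / (2 * a * q.1)) q := by
      fun_prop (disch := exact hden)
    exact DifferentiableAt.differentiableWithinAt (by fun_prop)
  · have hz := hfst p hp
    ext <;> simp only [toPlanar, πmap, Prod.smul_mk, smul_eq_mul] <;> field_simp

theorem exists_isBiholomorphicOn_basinF {γ : ℝ} (ha : a ≠ 0) (hγ : 1 < γ) (hc : c = 2 * a * γ) :
    ∃ Φ Ψ : ℂ × ℂ × ℂ → ℂ × ℂ × ℂ, IsBiholomorphicOn Φ Ψ (basinF a a c) ({0}ᶜ ×ˢ univ) := by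
  obtain ⟨Φ, Ψ, h⟩ := exists_isBiholomorphicOn_planarBasin hγ
  exact ⟨_, _,
    (isBiholomorphicOn_prodMk_toPlanar ha hc).trans ((IsBiholomorphicOn.refl _).prodMap h)⟩

end Semiconjugacy

theorem basin_biholomorphic_Cstar_C2_general {a c : ℂ} {γ : ℝ} (ha : a ≠ 0) (hγ : 1 < γ)
    (hc : c = 2 * a * γ) :
    Differentiable ℂ (Fmap a a c) ∧
    Function.Bijective (Fmap a a c) ∧
    (∃ Finv : ℂ × ℂ × ℂ → ℂ × ℂ × ℂ, Differentiable ℂ Finv ∧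
      Function.LeftInverse Finv (Fmap a a c) ∧ Function.RightInverse Finv (Fmap a a c)) ∧
    Fmap a a c 0 = 0 ∧
    fderiv ℂ (Fmap a a c) 0 = ContinuousLinearMap.id ℂ (ℂ × ℂ × ℂ) ∧
    (∃ Φ Ψ : ℂ × ℂ × ℂ → ℂ × ℂ × ℂ,
      DifferentiableOn ℂ Φ (basinF a a c) ∧
      DifferentiableOn ℂ Ψ {q : ℂ × ℂ × ℂ | q.1 ≠ 0} ∧
      Set.BijOn Φ (basinF a a c) {q : ℂ × ℂ × ℂ | q.1 ≠ 0} ∧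
      (∀ p ∈ basinF a a c, Ψ (Φ p) = p) ∧
      (∀ q ∈ {q : ℂ × ℂ × ℂ | q.1 ≠ 0}, Φ (Ψ q) = q)) := by
  obtain ⟨Finv, hF⟩ := exists_isBiholomorphicOn_Fmap a a c
  obtain ⟨Φ, Ψ, h⟩ := exists_isBiholomorphicOn_basinF ha hγ hc
  have htarget : ({0}ᶜ ×ˢ univ : Set (ℂ × ℂ × ℂ)) = {q | q.1 ≠ 0} := by ext; simp
  rw [htarget] at h
  exact ⟨differentiableOn_univ.1 hF.differentiableOn, bijOn_univ.1 hF.bijOn,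
    ⟨Finv, differentiableOn_univ.1 hF.differentiableOn_inv, fun p => hF.invOn.1 (mem_univ p),
      fun p => hF.invOn.2 (mem_univ p)⟩,
    (isTangentToId_Fmap a a c).map_zero, (isTangentToId_Fmap a a c).hasFDerivAt.fderiv,
    Φ, Ψ, h.differentiableOn, h.differentiableOn_inv, h.bijOn, h.invOn.1, h.invOn.2⟩

/-- Let `a = b > 0` real and `c > 2a` real. Then `F = φ₃ ∘ φ₂⁻¹ ∘ φ₁⁻¹ ∘ φ₂ ∘ φ₁`
is a holomorphic automorphism of `ℂ³` tangent to the identity at the origin, and its basin of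
attraction `Ω` is biholomorphic to `ℂ* × ℂ²`. -/
theorem basin_biholomorphic_Cstar_C2 (a c : ℝ) (ha : 0 < a) (hc : 2 * a < c) :
    -- `F` is a holomorphic automorphism
    Differentiable ℂ (Fmap (a : ℂ) (a : ℂ) (c : ℂ)) ∧
    Function.Bijective (Fmap (a : ℂ) (a : ℂ) (c : ℂ)) ∧
    (∃ Finv : ℂ × ℂ × ℂ → ℂ × ℂ × ℂ, Differentiable ℂ Finv ∧
      Function.LeftInverse Finv (Fmap (a : ℂ) (a : ℂ) (c : ℂ)) ∧
      Function.RightInverse Finv (Fmap (a : ℂ) (a : ℂ) (c : ℂ))) ∧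
    -- tangent to the identity at the origin
    Fmap (a : ℂ) (a : ℂ) (c : ℂ) 0 = 0 ∧
    fderiv ℂ (Fmap (a : ℂ) (a : ℂ) (c : ℂ)) 0 = ContinuousLinearMap.id ℂ (ℂ × ℂ × ℂ) ∧
    -- the basin is biholomorphic to `ℂ* × ℂ²`
    (∃ Φ Ψ : ℂ × ℂ × ℂ → ℂ × ℂ × ℂ,
      DifferentiableOn ℂ Φ (basinF (a : ℂ) (a : ℂ) (c : ℂ)) ∧
      DifferentiableOn ℂ Ψ {q : ℂ × ℂ × ℂ | q.1 ≠ 0} ∧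
      Set.BijOn Φ (basinF (a : ℂ) (a : ℂ) (c : ℂ)) {q : ℂ × ℂ × ℂ | q.1 ≠ 0} ∧
      (∀ p ∈ basinF (a : ℂ) (a : ℂ) (c : ℂ), Ψ (Φ p) = p) ∧
      (∀ q ∈ {q : ℂ × ℂ × ℂ | q.1 ≠ 0}, Φ (Ψ q) = q)) :=
  have ha' : (a : ℂ) ≠ 0 := Complex.ofReal_ne_zero.2 ha.ne'
  basin_biholomorphic_Cstar_C2_general (γ := c / (2 * a)) ha'
    ((one_lt_div₀ (by positivity)).2 hc) (by push_cast; field_simp)
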